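/- δ^s boundary behavior: let Ω be a bounded open set satisfying the exterior ball condition with radius ρ > 0, and let r₀ > 0. Then there exists a constant C, depending only on n, s, Ω, ρ and r₀, such that whenever f : Ω → ℝ and ψ : ℝⁿ → ℝ are bounded on Ω with ψ < 0 on ℝⁿ \ Ω, and u solves the fractional obstacle problem with contact set Λ satisfying dist(Λ, ∂Ω) ≥ r₀, one has |u(x)| ≤ C (‖f‖_{L∞(Ω)} + ‖ψ‖_{L∞(Ω)}) δ(x)^s for every x ∈ Ω, where δ(x) = dist(x, ∂Ω). -/

import Mathlib

open MeasureTheory Metric Set Filter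

/-- `fracLapEq n s u x g` : the integral fractional Laplacian `(−Δ)^s u(x)` exists
(as a principal value) and equals `g`. -/
def fracLapEq (n : ℕ) (s : ℝ) (u : EuclideanSpace ℝ (Fin n) → ℝ)
    (x : EuclideanSpace ℝ (Fin n)) (g : ℝ) : Prop :=
  Tendsto (fun ε : ℝ =>
      (2 ^ (2 * s) * s * Real.Gamma (s + n / 2) /
          (Real.pi ^ ((n : ℝ) / 2) * Real.Gamma (1 - s))) *
        ∫ y in {y : EuclideanSpace ℝ (Fin n) | ε < dist y x},
          (u x - u y) / dist x y ^ ((n : ℝ) + 2 * s))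
    (nhdsWithin 0 (Ioi 0)) (nhds g)

/-- `u` solves the fractional obstacle problem on `Ω` with forcing `f` and obstacle `ψ`. -/
def SolvesObstacle (n : ℕ) (s : ℝ) (Ω : Set (EuclideanSpace ℝ (Fin n)))
    (f ψ u : EuclideanSpace ℝ (Fin n) → ℝ) : Prop :=
  (∃ M, ∀ x, |u x| ≤ M) ∧ Continuous u ∧ (∀ x ∉ Ω, u x = 0) ∧
    ∀ x ∈ Ω, ∃ g, fracLapEq n s u x g ∧ min (g - f x) (u x - ψ x) = 0

/-- `Ω` satisfies the exterior ball condition with radius `ρ`. -/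
def ExteriorBallCondition (n : ℕ) (ρ : ℝ) (Ω : Set (EuclideanSpace ℝ (Fin n))) : Prop :=
  ∀ z ∈ frontier Ω, ∃ x₀ : EuclideanSpace ℝ (Fin n),
    dist x₀ z = ρ ∧ Metric.closedBall x₀ ρ ⊆ Ωᶜ

/-- the `L^∞(S)` norm, as `sSup {|f x| : x ∈ S}`. -/
noncomputable def supOn {α : Type*} (S : Set α) (f : α → ℝ) : ℝ :=
  sSup ((fun x => |f x|) '' S)

/-!
The function `(t₊)^s` of an affine coordinate `t` is `s`-harmonic where `t > 0`, which reduces by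
polar coordinates to a one-dimensional identity with an explicit primitive. Let `d` be the distance
to an exterior ball. The function `d^s` exceeds the profile of the tangent half-space only by a
curvature error, whose contribution to the fractional Laplacian is at most of order `d^(-σ)`, for a
`σ` that may be taken smaller than `s / 2`. Replacing `V = d^s` by the strictly concave
`V - V^(3/2)` gains a term of order `d^(-s/2)` from the exterior ball, which wins for small `d`.
Flattening the function further away from the ball, and cutting it off far away, produces a global
strict supersolution `W ≤ d^s`.

At a positive maximum of `u - A W`, the fractional Laplacian of `u` is at least that of `A W`, which
is impossible for `A` large where the equation holds; at contact points `u` is at most `sup ψ` and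
`W` is bounded below, so `A W` is at least `u` there. Hence `u ≤ A W` for such an `A`, and the ball
touching `∂Ω` at the point nearest to `x` gives the `δ^s` bound. The same argument applies to `-u`,
which is a subsolution everywhere in `Ω`.
-/

/-! ### Positive part powers -/

/-- The profile `t ↦ (t₊)^s`; composed with an affine function it is the half-space solution of
`(-Δ)^s u = 0`. -/
noncomputable def posRpow (s t : ℝ) : ℝ := max t 0 ^ s

section PosRpow

variable {s : ℝ}

lemma posRpow_of_nonneg {t : ℝ} (ht : 0 ≤ t) : posRpow s t = t ^ s := by
  rw [posRpow, max_eq_left ht]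

lemma posRpow_of_nonpos (hs : s ≠ 0) {t : ℝ} (ht : t ≤ 0) : posRpow s t = 0 := by
  rw [posRpow, max_eq_right ht, Real.zero_rpow hs]

lemma posRpow_one : posRpow s 1 = 1 := by
  rw [posRpow_of_nonneg zero_le_one, Real.one_rpow]

lemma posRpow_nonneg (t : ℝ) : 0 ≤ posRpow s t := by
  unfold posRpow; positivity

lemma monotone_posRpow (hs : 0 ≤ s) : Monotone (posRpow s) := fun _ _ hab =>
  Real.rpow_le_rpow (le_max_right _ _) (max_le_max_right 0 hab) hs

lemma continuous_posRpow (hs : 0 ≤ s) : Continuous (posRpow s) :=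
  (continuous_id.max continuous_const).rpow_const fun _ => Or.inr hs

lemma posRpow_mul {d : ℝ} (hd : 0 ≤ d) (t : ℝ) : posRpow s (d * t) = d ^ s * posRpow s t := by
  rw [posRpow, posRpow, ← Real.mul_rpow hd (le_max_right _ _), mul_max_of_nonneg _ _ hd, mul_zero]

lemma posRpow_add_le (hs₀ : 0 ≤ s) (hs₁ : s ≤ 1) (t : ℝ) {a : ℝ} (ha : 0 ≤ a) :
    posRpow s (t + a) ≤ posRpow s t + a ^ s :=
  calc posRpow s (t + a) ≤ (max t 0 + a) ^ s := by
        refine Real.rpow_le_rpow (le_max_right _ _) (max_le ?_ (by positivity)) hs₀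
        gcongr
        exact le_max_left _ _
    _ ≤ posRpow s t + a ^ s := Real.rpow_add_le_add_rpow (le_max_right _ _) ha hs₀ hs₁

lemma abs_posRpow_sub_le (hs₀ : 0 ≤ s) (hs₁ : s ≤ 1) (a b : ℝ) :
    |posRpow s a - posRpow s b| ≤ |a - b| ^ s := by
  wlog hab : b ≤ a generalizing a b
  · rw [abs_sub_comm, abs_sub_comm a b]
    exact this b a (le_of_not_ge hab)
  have hmono := monotone_posRpow hs₀ hab
  have hadd := posRpow_add_le hs₀ hs₁ b (sub_nonneg.2 hab)
  rw [add_sub_cancel] at hadd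
  rw [abs_of_nonneg (sub_nonneg.2 hmono), abs_of_nonneg (sub_nonneg.2 hab)]
  linarith

/-- The lower bound is AM-GM applied to `(1 + t)^s (1 - t)^s = (1 - t²)^s ≥ 1 - t²`. -/
lemma abs_two_sub_posRpow_sub_posRpow_le (hs₀ : 0 ≤ s) (hs₁ : s ≤ 1) {t : ℝ} (ht : |t| ≤ 1) :
    |2 - posRpow s (1 + t) - posRpow s (1 - t)| ≤ 2 * t ^ 2 := by
  obtain ⟨ht₁, ht₂⟩ := abs_le.1 ht
  have hp : 0 ≤ 1 + t := by linarith
  have hm : 0 ≤ 1 - t := by linarith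
  rw [posRpow_of_nonneg hp, posRpow_of_nonneg hm]
  have hsum : (1 + t) ^ s + (1 - t) ^ s ≤ 2 := by
    have h₁ := rpow_one_add_le_one_add_mul_self ht₁ hs₀ hs₁
    have h₂ := rpow_one_add_le_one_add_mul_self (neg_le_neg ht₂) hs₀ hs₁
    rw [← sub_eq_add_neg] at h₂
    linarith
  have hprod : 1 - t ^ 2 ≤ (1 + t) ^ s * (1 - t) ^ s := by
    rw [← Real.mul_rpow hp hm, show (1 + t) * (1 - t) = 1 - t ^ 2 by ring]
    exact Real.self_le_rpow_of_le_one (by nlinarith) (by nlinarith) hs₁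
  have hp' := Real.rpow_nonneg hp s
  have hm' := Real.rpow_nonneg hm s
  rw [abs_le]
  constructor
  · nlinarith
  · nlinarith [sq_nonneg ((1 + t) ^ s - (1 - t) ^ s)]

lemma abs_two_mul_rpow_sub_posRpow_sub_posRpow_le (hs₀ : 0 ≤ s) (hs₁ : s ≤ 1) {d b : ℝ}
    (hd : 0 < d) (hb : |b| ≤ d) :
    |2 * d ^ s - posRpow s (d + b) - posRpow s (d - b)| ≤ 2 * d ^ s * (b / d) ^ 2 := by
  have hratio : |b / d| ≤ 1 := by rwa [abs_div, abs_of_pos hd, div_le_one hd]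
  have hadd : d + b = d * (1 + b / d) := by field_simp
  have hsub : d - b = d * (1 - b / d) := by field_simp
  rw [hadd, hsub, posRpow_mul hd.le, posRpow_mul hd.le, mul_comm 2, ← mul_sub, ← mul_sub, abs_mul,
    abs_of_nonneg (by positivity), mul_assoc]
  gcongr
  exact abs_two_sub_posRpow_sub_posRpow_le hs₀ hs₁ hratio

end PosRpow

local notation "dim" => Module.finrank ℝ

/-! ### Integrability against the kernel -/

lemma norm_div_rpow_le {a q M y t : ℝ} (ht : 0 < t) (hy : |y| ≤ M * t ^ a) :
    ‖y / t ^ q‖ ≤ M * t ^ (-(q - a)) := by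
  rw [norm_div, Real.norm_eq_abs, Real.norm_of_nonneg (by positivity), neg_sub,
    Real.rpow_sub ht, ← mul_div_assoc]
  gcongr

section Kernel

variable {E : Type*} [NormedAddCommGroup E] [NormedSpace ℝ E] [FiniteDimensional ℝ E]
  [MeasurableSpace E] [BorelSpace E] {μ : Measure E} [μ.IsAddHaarMeasure]

lemma integrableOn_norm_rpow_neg_compl_ball {q r : ℝ} (hq : dim E < q) (hr : 0 < r) :
    IntegrableOn (fun h : E => ‖h‖ ^ (-q)) (ball 0 r)ᶜ μ := by
  have hq₀ : 0 ≤ q := (Nat.cast_nonneg _).trans hq.le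
  refine Integrable.mono' ((integrable_one_add_norm (μ := μ) hq).const_mul
    ((1 + 1 / r) ^ q)).integrableOn (Measurable.aestronglyMeasurable (by fun_prop)) ?_
  filter_upwards [ae_restrict_mem measurableSet_ball.compl] with h hh
  have hrh : r ≤ ‖h‖ := by simpa using hh
  have hh₀ : 0 < ‖h‖ := hr.trans_le hrh
  have hle : 1 + ‖h‖ ≤ (1 + 1 / r) * ‖h‖ := by
    have : 1 ≤ ‖h‖ / r := (one_le_div hr).2 hrh
    linarith [show (1 + 1 / r) * ‖h‖ = ‖h‖ / r + ‖h‖ by ring]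
  have hpow := Real.rpow_le_rpow (by positivity) hle hq₀
  rw [Real.mul_rpow (by positivity) hh₀.le] at hpow
  rw [Real.norm_of_nonneg (by positivity), Real.rpow_neg hh₀.le, Real.rpow_neg (by positivity),
    ← div_eq_mul_inv, le_div_iff₀ (by positivity), inv_mul_le_iff₀ (by positivity)]
  linarith

lemma integrableOn_div_norm_rpow_ball [Nontrivial E] {f : E → ℝ} (hf : Measurable f)
    {a q r M : ℝ} (hq : q < dim E + a) (hM : ∀ h ∈ ball (0 : E) r, |f h| ≤ M * ‖h‖ ^ a) :
    IntegrableOn (fun h => f h / ‖h‖ ^ q) (ball 0 r) μ := by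
  refine integrableOn_ball_of_norm_le_rpow Module.finrank_pos (C := M) (α := q - a) (by linarith) ?_
    (Measurable.aestronglyMeasurable (by fun_prop))
  filter_upwards [ae_restrict_mem measurableSet_ball, ae_restrict_of_ae (μ.ae_ne 0)] with h hh hne
  exact norm_div_rpow_le (norm_pos_iff.2 hne) (hM h hh)

lemma integrableOn_div_norm_rpow_compl_ball {f : E → ℝ} (hf : Measurable f) {a q r M : ℝ}
    (hr : 0 < r) (hq : dim E + a < q) (hM : ∀ h ∉ ball (0 : E) r, |f h| ≤ M * ‖h‖ ^ a) :
    IntegrableOn (fun h => f h / ‖h‖ ^ q) (ball 0 r)ᶜ μ := by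
  refine Integrable.mono' ((integrableOn_norm_rpow_neg_compl_ball (q := q - a)
    (by linarith) hr).const_mul M) (Measurable.aestronglyMeasurable (by fun_prop)) ?_
  filter_upwards [ae_restrict_mem measurableSet_ball.compl] with h hh
  have hrh : r ≤ ‖h‖ := by simpa using hh
  exact norm_div_rpow_le (hr.trans_le hrh) (hM h hh)

lemma integrableOn_div_norm_rpow_compl_closedBall_of_bounded {f : E → ℝ} (hf : Measurable f)
    {q r M : ℝ} (hr : 0 < r) (hq : dim E < q) (hM : ∀ h, |f h| ≤ M) :
    IntegrableOn (fun h => f h / ‖h‖ ^ q) (closedBall 0 r)ᶜ μ :=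
  (integrableOn_div_norm_rpow_compl_ball (a := 0) hf hr (by simpa using hq)
    fun h _ => by simpa using hM h).mono_set (compl_subset_compl.2 ball_subset_closedBall)

variable {s : ℝ}

lemma integrableOn_posRpow_increment_compl_ball (hs₀ : 0 < s) (hs₁ : s ≤ 1) (ℓ : E →L[ℝ] ℝ)
    (d : ℝ) {r : ℝ} (hr : 0 < r) :
    IntegrableOn (fun h => (posRpow s d - posRpow s (d + ℓ h)) / ‖h‖ ^ (dim E + 2 * s))
      (ball 0 r)ᶜ μ := by
  have hcont : Continuous (posRpow s) := continuous_posRpow hs₀.le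
  refine integrableOn_div_norm_rpow_compl_ball (a := s) (M := ‖ℓ‖ ^ s)
    (Continuous.measurable (by fun_prop)) hr (by linarith) fun h _ => ?_
  calc |posRpow s d - posRpow s (d + ℓ h)| ≤ |d - (d + ℓ h)| ^ s :=
        abs_posRpow_sub_le hs₀.le hs₁ _ _
    _ = ‖ℓ h‖ ^ s := by rw [sub_add_cancel_left, abs_neg, Real.norm_eq_abs]
    _ ≤ (‖ℓ‖ * ‖h‖) ^ s := by gcongr; exact ℓ.le_opNorm h
    _ = ‖ℓ‖ ^ s * ‖h‖ ^ s := Real.mul_rpow (norm_nonneg _) (norm_nonneg _)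

lemma integrableOn_posRpow_secondDiff_ball [Nontrivial E] (hs₀ : 0 < s) (hs₁ : s < 1)
    (ℓ : E →L[ℝ] ℝ) {d r : ℝ} (hd : 0 < d) (hr : ‖ℓ‖ * r ≤ d) :
    IntegrableOn (fun h => (2 * posRpow s d - posRpow s (d + ℓ h) - posRpow s (d - ℓ h)) /
      ‖h‖ ^ (dim E + 2 * s)) (ball 0 r) μ := by
  have hcont : Continuous (posRpow s) := continuous_posRpow hs₀.le
  refine integrableOn_div_norm_rpow_ball (a := 2) (M := 2 * d ^ s * (‖ℓ‖ / d) ^ 2)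
    (Continuous.measurable (by fun_prop)) (by linarith) fun h hh => ?_
  have hhr : ‖h‖ < r := by simpa using hh
  have hℓh : |ℓ h| ≤ ‖ℓ‖ * ‖h‖ := ℓ.le_opNorm h
  rw [posRpow_of_nonneg hd.le]
  calc _ ≤ 2 * d ^ s * (ℓ h / d) ^ 2 := by
        refine abs_two_mul_rpow_sub_posRpow_sub_posRpow_le hs₀.le hs₁.le hd (hℓh.trans ?_)
        exact (by gcongr : ‖ℓ‖ * ‖h‖ ≤ ‖ℓ‖ * r).trans hr
    _ = 2 * d ^ s * (|ℓ h| / d) ^ 2 := by rw [div_pow, div_pow, sq_abs]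
    _ ≤ 2 * d ^ s * (‖ℓ‖ * ‖h‖ / d) ^ 2 := by gcongr
    _ = 2 * d ^ s * (‖ℓ‖ / d) ^ 2 * ‖h‖ ^ (2 : ℝ) := by rw [Real.rpow_two]; ring

lemma integrable_posRpow_secondDiff [Nontrivial E] (hs₀ : 0 < s) (hs₁ : s < 1) (ℓ : E →L[ℝ] ℝ)
    {d : ℝ} (hd : 0 < d) :
    Integrable (fun h => (2 * posRpow s d - posRpow s (d + ℓ h) - posRpow s (d - ℓ h)) /
      ‖h‖ ^ (dim E + 2 * s)) μ := by
  obtain ⟨r, hr₀, hr⟩ : ∃ r > 0, ‖ℓ‖ * r ≤ d :=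
    ⟨d / (‖ℓ‖ + 1), by positivity, by
      rw [← mul_div_assoc, div_le_iff₀ (by positivity)]; nlinarith⟩
  rw [← integrableOn_univ, ← union_compl_self (ball (0 : E) r), integrableOn_union]
  refine ⟨integrableOn_posRpow_secondDiff_ball hs₀ hs₁ ℓ hd hr, ?_⟩
  refine ((integrableOn_posRpow_increment_compl_ball hs₀ hs₁.le ℓ d hr₀).add
    (integrableOn_posRpow_increment_compl_ball hs₀ hs₁.le (-ℓ) d hr₀)).congr
    (Eventually.of_forall fun h => ?_)
  simp only [Pi.add_apply, neg_apply, ← sub_eq_add_neg]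
  ring

end Kernel

/-! ### The one-dimensional identity -/

/-- The increment of `posRpow s` at the point `1`, weighted by the one-dimensional kernel. -/
noncomputable def unitIncrement (s t : ℝ) : ℝ := (1 - posRpow s (1 + t)) / |t| ^ (1 + 2 * s)

/-- A primitive, up to the factor `-2s`, of `unitIncrement s (-u)` plus the pullback of
`unitIncrement s` under `u ↦ u / (1 - u)`. -/
noncomputable def incrementPrimitive (s u : ℝ) : ℝ := (1 - (1 - u) ^ s) ^ 2 / u ^ (2 * s)

section OneDimensional

variable {s : ℝ}

lemma integrableOn_unitIncrement_Ioi (hs₀ : 0 < s) (hs₁ : s ≤ 1) {a : ℝ} (ha : 0 < a) :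
    IntegrableOn (unitIncrement s) (Ioi a) := by
  have h := integrableOn_posRpow_increment_compl_ball (μ := volume) hs₀ hs₁
    (ContinuousLinearMap.id ℝ ℝ) 1 ha
  simp only [Module.finrank_self, Nat.cast_one, posRpow_one] at h
  exact h.mono_set fun t ht => by simpa using (le_of_lt ht).trans (le_abs_self t)

lemma integrableOn_unitIncrement_neg_Ioi (hs₀ : 0 < s) (hs₁ : s ≤ 1) {a : ℝ} (ha : 0 < a) :
    IntegrableOn (fun t => unitIncrement s (-t)) (Ioi a) := by
  have h := integrableOn_posRpow_increment_compl_ball (μ := volume) hs₀ hs₁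
    (-ContinuousLinearMap.id ℝ ℝ) 1 ha
  simp only [Module.finrank_self, Nat.cast_one, posRpow_one] at h
  simp only [unitIncrement, abs_neg]
  exact h.mono_set fun t ht => by simpa using (le_of_lt ht).trans (le_abs_self t)

lemma integrable_unitIncrement_add_unitIncrement_neg (hs₀ : 0 < s) (hs₁ : s < 1) :
    Integrable fun t => unitIncrement s t + unitIncrement s (-t) := by
  have h := integrable_posRpow_secondDiff (μ := volume) hs₀ hs₁
    (ContinuousLinearMap.id ℝ ℝ) one_pos
  simp only [Module.finrank_self, Nat.cast_one, posRpow_one] at h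
  refine h.congr (Eventually.of_forall fun t => ?_)
  simp only [unitIncrement, abs_neg, ContinuousLinearMap.id_apply, Real.norm_eq_abs,
    ← sub_eq_add_neg]
  ring

lemma unitIncrement_neg_of_lt_one {u : ℝ} (hu : u ∈ Ioo 0 1) :
    unitIncrement s (-u) = (1 - (1 - u) ^ s) / u ^ (1 + 2 * s) := by
  rw [unitIncrement, abs_neg, abs_of_pos hu.1, ← sub_eq_add_neg,
    posRpow_of_nonneg (sub_nonneg.2 hu.2.le)]

lemma inv_sq_mul_unitIncrement_div_one_sub {u : ℝ} (hu : u ∈ Ioo 0 1) :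
    (1 / (1 - u) ^ 2) * unitIncrement s (u / (1 - u)) =
      ((1 - u) ^ (2 * s - 1) - (1 - u) ^ (s - 1)) / u ^ (1 + 2 * s) := by
  obtain ⟨hu₀, hu₁⟩ := hu
  have hv : 0 < 1 - u := by linarith
  have hone : 1 + u / (1 - u) = (1 - u)⁻¹ := by field_simp; ring
  have hpow : (1 - u) ^ (1 + 2 * s) = (1 - u) ^ s * (1 - u) ^ s * (1 - u) := by
    rw [← Real.rpow_add hv, ← Real.rpow_add_one hv.ne']; ring_nf
  have hpow' : (1 - u) ^ (2 * s - 1) = (1 - u) ^ s * (1 - u) ^ s / (1 - u) := by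
    rw [← Real.rpow_add hv, ← Real.rpow_sub_one hv.ne']; ring_nf
  rw [unitIncrement, abs_of_pos (by positivity), hone, posRpow_of_nonneg (by positivity),
    Real.inv_rpow hv.le, Real.div_rpow hu₀.le hv.le, hpow, hpow', Real.rpow_sub_one hv.ne']
  field_simp

lemma hasDerivAt_div_one_sub {u : ℝ} (hu : u ≠ 1) :
    HasDerivAt (fun u : ℝ => u / (1 - u)) (1 / (1 - u) ^ 2) u := by
  have h := (hasDerivAt_id u).div ((hasDerivAt_id u).const_sub 1) (sub_ne_zero.2 hu.symm)
  refine h.congr_deriv ?_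
  simp only [id_eq]
  ring

lemma image_div_one_sub_Ioo {a : ℝ} (ha : a ∈ Ioo 0 1) :
    (fun u : ℝ => u / (1 - u)) '' Ioo a 1 = Ioi (a / (1 - a)) := by
  obtain ⟨ha₀, ha₁⟩ := ha
  have ha' : 0 < 1 - a := sub_pos.2 ha₁
  ext t
  constructor
  · rintro ⟨u, ⟨hau, hu₁⟩, rfl⟩
    have hu' : 0 < 1 - u := sub_pos.2 hu₁
    rw [mem_Ioi, div_lt_div_iff₀ ha' hu']
    linarith
  · intro ht
    have ht₀ : 0 < t := (by positivity : 0 < a / (1 - a)).trans ht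
    rw [mem_Ioi, div_lt_iff₀ ha'] at ht
    refine ⟨t / (1 + t), ⟨?_, ?_⟩, by field_simp; ring⟩
    · rw [lt_div_iff₀ (by positivity)]
      linarith
    · rw [div_lt_one (by positivity)]
      linarith

lemma monotoneOn_div_one_sub : MonotoneOn (fun u : ℝ => u / (1 - u)) (Iio 1) := by
  intro u hu v hv huv
  have hu' : 0 < 1 - u := sub_pos.2 hu
  have hv' : 0 < 1 - v := sub_pos.2 hv
  simp only
  rw [div_le_div_iff₀ hu' hv']
  linarith

lemma integrableOn_and_integral_Ioi_unitIncrement (hs₀ : 0 < s) (hs₁ : s ≤ 1) {a : ℝ}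
    (ha : a ∈ Ioo 0 1) :
    IntegrableOn (fun u => ((1 - u) ^ (2 * s - 1) - (1 - u) ^ (s - 1)) / u ^ (1 + 2 * s))
        (Ioo a 1) ∧
      ∫ t in Ioi (a / (1 - a)), unitIncrement s t =
        ∫ u in Ioo a 1, ((1 - u) ^ (2 * s - 1) - (1 - u) ^ (s - 1)) / u ^ (1 + 2 * s) := by
  have ha' : 0 < 1 - a := sub_pos.2 ha.2
  have hint := integrableOn_unitIncrement_Ioi hs₀ hs₁ (div_pos ha.1 ha')
  have hderiv : ∀ u ∈ Ioo a 1,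
      HasDerivWithinAt (fun u : ℝ => u / (1 - u)) (1 / (1 - u) ^ 2) (Ioo a 1) u := fun u hu =>
    (hasDerivAt_div_one_sub hu.2.ne).hasDerivWithinAt
  have hmono := monotoneOn_div_one_sub.mono (Ioo_subset_Iio_self (a := a))
  have hpullback : EqOn (fun u => (1 / (1 - u) ^ 2) • unitIncrement s (u / (1 - u)))
      (fun u => ((1 - u) ^ (2 * s - 1) - (1 - u) ^ (s - 1)) / u ^ (1 + 2 * s)) (Ioo a 1) :=
    fun u hu => inv_sq_mul_unitIncrement_div_one_sub ⟨ha.1.trans hu.1, hu.2⟩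
  rw [← image_div_one_sub_Ioo ha] at hint ⊢
  rw [integral_image_eq_integral_deriv_smul_of_monotoneOn measurableSet_Ioo hderiv hmono]
  rw [integrableOn_image_iff_integrableOn_deriv_smul_of_monotoneOn measurableSet_Ioo hderiv
    hmono] at hint
  exact ⟨hint.congr_fun hpullback measurableSet_Ioo,
    setIntegral_congr_fun measurableSet_Ioo hpullback⟩

lemma hasDerivAt_incrementPrimitive {u : ℝ} (hu : u ∈ Ioo 0 1) :
    HasDerivAt (incrementPrimitive s)
      (-(2 * s) * (unitIncrement s (-u) +
        ((1 - u) ^ (2 * s - 1) - (1 - u) ^ (s - 1)) / u ^ (1 + 2 * s))) u := by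
  obtain ⟨hu₀, hu₁⟩ := hu
  have hv : 0 < 1 - u := sub_pos.2 hu₁
  have hpow : HasDerivAt (fun u : ℝ => 1 - (1 - u) ^ s) (s * (1 - u) ^ (s - 1)) u := by
    have h := (((hasDerivAt_id u).const_sub 1).rpow_const (p := s) (Or.inl hv.ne')).const_sub 1
    refine h.congr_deriv ?_
    simp only [id_eq]
    ring
  have h := (hpow.pow 2).div (Real.hasDerivAt_rpow_const (p := 2 * s) (Or.inl hu₀.ne'))
    (Real.rpow_pos_of_pos hu₀ _).ne'
  refine h.congr_deriv ?_
  have hsq : (1 - u) ^ (2 * s - 1) = (1 - u) ^ s * (1 - u) ^ s / (1 - u) := by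
    rw [← Real.rpow_add hv, ← Real.rpow_sub_one hv.ne']; ring_nf
  rw [unitIncrement_neg_of_lt_one ⟨hu₀, hu₁⟩, hsq, Real.rpow_sub_one hv.ne',
    Real.rpow_sub_one hu₀.ne', add_comm 1 (2 * s), Real.rpow_add_one hu₀.ne']
  simp only [Pi.pow_apply]
  field_simp
  ring

lemma continuousOn_incrementPrimitive (hs : 0 < s) {a : ℝ} (ha : 0 < a) :
    ContinuousOn (incrementPrimitive s) (Icc a 1) := by
  have hnum : Continuous fun u : ℝ => (1 - (1 - u) ^ s) ^ 2 :=
    (continuous_const.sub ((continuous_const.sub continuous_id).rpow_const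
      fun _ => Or.inr hs.le)).pow 2
  have hden : Continuous fun u : ℝ => u ^ (2 * s) :=
    continuous_id.rpow_const fun _ => Or.inr (by positivity)
  exact hnum.continuousOn.div hden.continuousOn
    fun u hu => (Real.rpow_pos_of_pos (ha.trans_le hu.1) _).ne'

lemma incrementPrimitive_one (hs : s ≠ 0) : incrementPrimitive s 1 = 1 := by
  simp [incrementPrimitive, Real.zero_rpow hs]

lemma integral_Ioi_one_unitIncrement_neg (hs : 0 < s) :
    ∫ t in Ioi 1, unitIncrement s (-t) = 1 / (2 * s) := by
  have hcongr : EqOn (fun t => unitIncrement s (-t)) (fun t => t ^ (-(1 + 2 * s))) (Ioi 1) := by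
    intro t ht
    have ht₁ : 1 < t := ht
    have ht₀ : 0 < t := one_pos.trans ht₁
    simp only [unitIncrement]
    rw [posRpow_of_nonpos hs.ne' (by linarith), abs_neg, abs_of_pos ht₀, sub_zero,
      Real.rpow_neg ht₀.le, one_div]
  rw [setIntegral_congr_fun measurableSet_Ioi hcongr,
    integral_Ioi_rpow_of_lt (by linarith) one_pos, Real.one_rpow]
  field_simp
  ring

lemma integral_Ioi_unitIncrement_add_integral_Ioi_unitIncrement_neg (hs₀ : 0 < s) (hs₁ : s ≤ 1)
    {a : ℝ} (ha : a ∈ Ioo 0 1) :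
    (∫ t in Ioi (a / (1 - a)), unitIncrement s t) + ∫ t in Ioi a, unitIncrement s (-t) =
      incrementPrimitive s a / (2 * s) := by
  obtain ⟨hpull, hsubst⟩ := integrableOn_and_integral_Ioi_unitIncrement hs₀ hs₁ ha
  have hneg := integrableOn_unitIncrement_neg_Ioi hs₀ hs₁ ha.1
  have hnegIoc : IntegrableOn (fun t => unitIncrement s (-t)) (Ioc a 1) :=
    hneg.mono_set Ioc_subset_Ioi_self
  have hsplit : ∫ t in Ioi a, unitIncrement s (-t) =
      (∫ t in Ioc a 1, unitIncrement s (-t)) + 1 / (2 * s) := by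
    rw [← integral_Ioi_one_unitIncrement_neg hs₀, ← setIntegral_union Ioc_disjoint_Ioi_same
      measurableSet_Ioi hnegIoc (hneg.mono_set (Ioi_subset_Ioi ha.2.le)),
      Ioc_union_Ioi_eq_Ioi ha.2.le]
  have hFTC := intervalIntegral.integral_eq_sub_of_hasDerivAt_of_le ha.2.le
    (continuousOn_incrementPrimitive hs₀ ha.1)
    (fun u hu => hasDerivAt_incrementPrimitive ⟨ha.1.trans hu.1, hu.2⟩)
    ((intervalIntegrable_iff_integrableOn_Ioo_of_le ha.2.le).2
      (((hneg.mono_set Ioo_subset_Ioi_self).add hpull).const_mul _))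
  rw [intervalIntegral.integral_of_le ha.2.le, integral_const_mul, integral_add hnegIoc
    ((integrableOn_Ioc_iff_integrableOn_Ioo).2 hpull), incrementPrimitive_one hs₀.ne',
    integral_Ioc_eq_integral_Ioo (f := fun u => (_ - _) / _)] at hFTC
  rw [hsubst, hsplit, eq_div_iff (by positivity)]
  field_simp
  linarith

lemma one_sub_one_sub_rpow_mem_Icc (hs₀ : 0 ≤ s) (hs₁ : s ≤ 1) {u : ℝ} (hu : u ∈ Icc 0 1) :
    1 - (1 - u) ^ s ∈ Icc 0 u := by
  have hv : 0 ≤ 1 - u := sub_nonneg.2 hu.2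
  have hv₁ : 1 - u ≤ 1 := by linarith [hu.1]
  constructor
  · linarith [Real.rpow_le_one hv hv₁ hs₀]
  · linarith [Real.self_le_rpow_of_le_one hv hv₁ hs₁]

lemma incrementPrimitive_mem_Icc (hs₀ : 0 ≤ s) (hs₁ : s ≤ 1) {u : ℝ} (hu : u ∈ Ioc 0 1) :
    incrementPrimitive s u ∈ Icc 0 (u ^ (2 - 2 * s)) := by
  have hu₀ := hu.1
  obtain ⟨h₀, h₁⟩ := one_sub_one_sub_rpow_mem_Icc hs₀ hs₁ ⟨hu₀.le, hu.2⟩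
  rw [incrementPrimitive, Real.rpow_sub hu₀, Real.rpow_two]
  exact ⟨by positivity, by gcongr⟩

lemma norm_integral_Ioc_unitIncrement_neg_le (hs₀ : 0 ≤ s) (hs₁ : s ≤ 1) {a : ℝ}
    (ha : a ∈ Ioo 0 (1 / 2)) :
    ‖∫ t in Ioc a (a / (1 - a)), unitIncrement s (-t)‖ ≤ 2 * a ^ (2 - 2 * s) := by
  obtain ⟨ha₀, ha₁⟩ := ha
  have ha' : 0 < 1 - a := by linarith
  have hlt : a / (1 - a) < 1 := by rw [div_lt_one ha']; linarith
  have hlen : volume.real (Ioc a (a / (1 - a))) ≤ 2 * a ^ 2 := by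
    have hdiff : a / (1 - a) - a = a ^ 2 / (1 - a) := by field_simp; ring
    rw [Real.volume_real_Ioc_of_le (by rw [le_div_iff₀ ha']; nlinarith), hdiff, div_le_iff₀ ha']
    nlinarith
  have hbound : ∀ t ∈ Ioc a (a / (1 - a)), ‖unitIncrement s (-t)‖ ≤ a ^ (-(2 * s)) := by
    intro t ht
    have ht₀ : 0 < t := ha₀.trans ht.1
    have ht₁ : t < 1 := ht.2.trans_lt hlt
    obtain ⟨h₀, h₁⟩ := one_sub_one_sub_rpow_mem_Icc hs₀ hs₁ ⟨ht₀.le, ht₁.le⟩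
    rw [unitIncrement_neg_of_lt_one ⟨ht₀, ht₁⟩, Real.norm_of_nonneg (by positivity)]
    calc (1 - (1 - t) ^ s) / t ^ (1 + 2 * s) ≤ t / t ^ (1 + 2 * s) := by gcongr
      _ = t ^ (-(2 * s)) := by
        rw [add_comm, Real.rpow_add_one ht₀.ne', Real.rpow_neg ht₀.le]; field_simp
      _ ≤ a ^ (-(2 * s)) :=
        Real.rpow_le_rpow_of_nonpos ha₀ ht.1.le (by linarith)
  calc _ ≤ a ^ (-(2 * s)) * volume.real (Ioc a (a / (1 - a))) :=
        norm_setIntegral_le_of_norm_le_const measure_Ioc_lt_top hbound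
    _ ≤ a ^ (-(2 * s)) * (2 * a ^ 2) := by gcongr
    _ = 2 * a ^ (2 - 2 * s) := by
      rw [sub_eq_add_neg, Real.rpow_add ha₀, Real.rpow_two]; ring

lemma norm_integral_Ioi_unitIncrement_add_unitIncrement_neg_le (hs₀ : 0 < s) (hs₁ : s ≤ 1)
    {a : ℝ} (ha : a ∈ Ioo 0 (1 / 2)) :
    ‖∫ t in Ioi (a / (1 - a)), (unitIncrement s t + unitIncrement s (-t))‖ ≤
      (1 / (2 * s) + 2) * a ^ (2 - 2 * s) := by
  have ha₀ := ha.1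
  have ha₁ : a < 1 := ha.2.trans (by norm_num)
  have ha' : 0 < 1 - a := sub_pos.2 ha₁
  have hle : a ≤ a / (1 - a) := by rw [le_div_iff₀ ha']; nlinarith
  have hneg := integrableOn_unitIncrement_neg_Ioi hs₀ hs₁ ha₀
  have hneg' := hneg.mono_set (Ioi_subset_Ioi hle)
  have hsplit : ∫ t in Ioi a, unitIncrement s (-t) =
      (∫ t in Ioc a (a / (1 - a)), unitIncrement s (-t)) +
        ∫ t in Ioi (a / (1 - a)), unitIncrement s (-t) := by
    rw [← setIntegral_union Ioc_disjoint_Ioi_same measurableSet_Ioi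
      (hneg.mono_set Ioc_subset_Ioi_self) hneg', Ioc_union_Ioi_eq_Ioi hle]
  have hsum := integral_Ioi_unitIncrement_add_integral_Ioi_unitIncrement_neg hs₀ hs₁ ⟨ha₀, ha₁⟩
  have hIoc := norm_integral_Ioc_unitIncrement_neg_le hs₀.le hs₁ ha
  obtain ⟨hprim₀, hprim⟩ := incrementPrimitive_mem_Icc hs₀.le hs₁ ⟨ha₀, ha₁.le⟩
  have heq : ∫ t in Ioi (a / (1 - a)), (unitIncrement s t + unitIncrement s (-t)) =
      incrementPrimitive s a / (2 * s) - ∫ t in Ioc a (a / (1 - a)), unitIncrement s (-t) := by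
    rw [integral_add (integrableOn_unitIncrement_Ioi hs₀ hs₁ (by positivity)) hneg']
    linarith
  rw [heq]
  calc _ ≤ ‖incrementPrimitive s a / (2 * s)‖ +
        ‖∫ t in Ioc a (a / (1 - a)), unitIncrement s (-t)‖ := norm_sub_le _ _
    _ ≤ a ^ (2 - 2 * s) / (2 * s) + 2 * a ^ (2 - 2 * s) := by
      rw [Real.norm_of_nonneg (by positivity)]
      gcongr
    _ = (1 / (2 * s) + 2) * a ^ (2 - 2 * s) := by ring

lemma integral_Ioi_unitIncrement_add_unitIncrement_neg (hs₀ : 0 < s) (hs₁ : s < 1) :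
    ∫ t in Ioi 0, (unitIncrement s t + unitIncrement s (-t)) = 0 := by
  have hid : Tendsto (fun a : ℝ => a) (nhdsWithin 0 (Ioi 0)) (nhds 0) :=
    tendsto_nhdsWithin_of_tendsto_nhds tendsto_id
  have hlower : Tendsto (fun a : ℝ => a / (1 - a)) (nhdsWithin 0 (Ioi 0)) (nhds 0) := by
    simpa [Pi.div_def] using hid.div (hid.const_sub 1) (by simp)
  have hcover := aecover_Ioi_of_Ioi (μ := volume) hlower
  have hintegral := hcover.integral_tendsto_of_countably_generated
    (integrable_unitIncrement_add_unitIncrement_neg hs₀ hs₁).integrableOn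
  have hbound : Tendsto (fun a : ℝ => (1 / (2 * s) + 2) * a ^ (2 - 2 * s))
      (nhdsWithin 0 (Ioi 0)) (nhds 0) := by
    have h := (hid.rpow_const (p := 2 - 2 * s) (Or.inr (by linarith))).const_mul (1 / (2 * s) + 2)
    rwa [Real.zero_rpow (by linarith), mul_zero] at h
  refine tendsto_nhds_unique hintegral (squeeze_zero_norm' ?_ hbound)
  filter_upwards [Ioo_mem_nhdsGT (show (0 : ℝ) < 1 / 2 by norm_num)] with a ha
  rw [Measure.restrict_restrict measurableSet_Ioi, inter_eq_left.2
    (Ioi_subset_Ioi (div_nonneg ha.1.le (by linarith [ha.2])))]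
  exact norm_integral_Ioi_unitIncrement_add_unitIncrement_neg_le hs₀ hs₁.le ha

lemma integral_Ioi_posRpow_secondDiff (hs₀ : 0 < s) (hs₁ : s < 1) {d : ℝ} (hd : 0 < d) (b : ℝ) :
    ∫ r in Ioi 0, (2 * posRpow s d - posRpow s (d + r * b) - posRpow s (d - r * b)) /
      r ^ (1 + 2 * s) = 0 := by
  wlog hb : 0 < b generalizing b
  · rcases eq_or_lt_of_le (not_lt.1 hb) with rfl | hb
    · simp [two_mul]
    · simpa only [mul_neg, sub_neg_eq_add, ← sub_eq_add_neg, sub_right_comm]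
        using this (-b) (neg_pos.2 hb)
  set k := b / d with hk
  have hk₀ : 0 < k := by positivity
  have hscale : EqOn (fun r => (2 * posRpow s d - posRpow s (d + r * b) - posRpow s (d - r * b)) /
        r ^ (1 + 2 * s))
      (fun r => d ^ s * k ^ (1 + 2 * s) * (unitIncrement s (r * k) + unitIncrement s (-(r * k))))
      (Ioi 0) := by
    intro r hr
    have hr₀ : 0 < r := hr
    have hadd : d + r * b = d * (1 + r * k) := by rw [hk]; field_simp
    have hsub : d - r * b = d * (1 + -(r * k)) := by rw [hk]; field_simp; ring
    simp only [unitIncrement]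
    rw [hadd, hsub, posRpow_mul hd.le, posRpow_mul hd.le, posRpow_of_nonneg hd.le, abs_neg,
      abs_of_pos (by positivity : 0 < r * k), Real.mul_rpow hr₀.le hk₀.le]
    field_simp
    ring
  rw [setIntegral_congr_fun measurableSet_Ioi hscale, integral_const_mul,
    integral_comp_mul_right_Ioi (fun t => unitIncrement s t + unitIncrement s (-t)) 0 hk₀,
    zero_mul, integral_Ioi_unitIncrement_add_unitIncrement_neg hs₀ hs₁, smul_zero, mul_zero]

end OneDimensional

/-! ### Truncated fractional Laplacians -/

/-- The integrand `(u x - u (x + h)) / ‖h‖^(n + 2s)` of the fractional Laplacian, centred at `x`. -/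
noncomputable def fracIncrement {E : Type*} [NormedAddCommGroup E] [NormedSpace ℝ E] (s : ℝ)
    (u : E → ℝ) (x h : E) : ℝ := (u x - u (x + h)) / ‖h‖ ^ (dim E + 2 * s)

/-- The fractional Laplacian truncated at distance `ε`, without its normalising constant. -/
noncomputable def truncFracLap {E : Type*} [NormedAddCommGroup E] [NormedSpace ℝ E]
    [MeasurableSpace E] (μ : Measure E) (s : ℝ) (u : E → ℝ) (ε : ℝ) (x : E) : ℝ :=
  ∫ h in (closedBall 0 ε)ᶜ, fracIncrement s u x h ∂μ

section TruncFracLap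

variable {E : Type*} [NormedAddCommGroup E] [NormedSpace ℝ E] [FiniteDimensional ℝ E]
  [MeasurableSpace E] [BorelSpace E] {μ : Measure E} [μ.IsAddHaarMeasure] {s : ℝ}

lemma integral_eq_integral_sphere_integral_Ioi [Nontrivial E] {V : Type*} [NormedAddCommGroup V]
    [NormedSpace ℝ V] {F : E → V} (hF : Integrable F μ) :
    ∫ x, F x ∂μ = ∫ θ : sphere (0 : E) 1,
      (∫ r in Ioi (0 : ℝ), r ^ (dim E - 1) • F (r • θ.1)) ∂μ.toSphere := by
  let G : sphere (0 : E) 1 × Ioi (0 : ℝ) → V := fun y => F (y.2.1 • y.1.1)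
  have hpres := μ.measurePreserving_homeomorphUnitSphereProd
  have hemb := (homeomorphUnitSphereProd E).measurableEmbedding
  have hG : (fun x : ({0}ᶜ : Set E) => F x.1) = G ∘ homeomorphUnitSphereProd E := by
    funext x
    have h := homeomorphUnitSphereProd_symm_apply_coe E (homeomorphUnitSphereProd E x)
    rw [Homeomorph.symm_apply_apply] at h
    exact congrArg F h
  have hGint : Integrable G (μ.toSphere.prod (.volumeIoiPow (dim E - 1))) := by
    rw [← hpres.integrable_comp_emb hemb, ← hG]
    exact (integrableOn_iff_comap_subtypeVal (measurableSet_singleton 0).compl).1 hF.integrableOn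
  have hradial (θ : sphere (0 : E) 1) : ∫ r, G (θ, r) ∂Measure.volumeIoiPow (dim E - 1) =
      ∫ r in Ioi (0 : ℝ), r ^ (dim E - 1) • F (r • θ.1) := by
    simp only [Measure.volumeIoiPow, ENNReal.ofReal, G]
    rw [integral_withDensity_eq_integral_smul
        (measurable_subtype_coe.pow_const _).real_toNNReal,
      integral_subtype_comap measurableSet_Ioi
        fun r : ℝ ↦ Real.toNNReal (r ^ (dim E - 1)) • F (r • θ.1)]
    refine setIntegral_congr_fun measurableSet_Ioi fun r hr ↦ ?_
    simp only [NNReal.smul_def, Real.coe_toNNReal _ (pow_nonneg (le_of_lt hr) _)]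
  calc ∫ x, F x ∂μ = ∫ x : ({0}ᶜ : Set E), F x.1 ∂μ.comap (↑) := by
        rw [integral_subtype_comap (measurableSet_singleton _).compl F, restrict_compl_singleton]
    _ = ∫ y, G y ∂μ.toSphere.prod (.volumeIoiPow (dim E - 1)) := by
        rw [← hpres.integral_comp hemb, hG]; rfl
    _ = _ := by rw [integral_prod _ hGint]; simp only [hradial]

lemma integral_posRpow_secondDiff [Nontrivial E] (hs₀ : 0 < s) (hs₁ : s < 1) (ℓ : E →L[ℝ] ℝ)
    {d : ℝ} (hd : 0 < d) :
    ∫ h, (2 * posRpow s d - posRpow s (d + ℓ h) - posRpow s (d - ℓ h)) /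
      ‖h‖ ^ (dim E + 2 * s) ∂μ = 0 := by
  rw [integral_eq_integral_sphere_integral_Ioi (integrable_posRpow_secondDiff hs₀ hs₁ ℓ hd)]
  refine integral_eq_zero_of_ae (Eventually.of_forall fun θ => ?_)
  refine (setIntegral_congr_fun measurableSet_Ioi fun r hr => ?_).trans
    (integral_Ioi_posRpow_secondDiff hs₀ hs₁ hd (ℓ θ))
  have hr₀ : 0 < r := hr
  have hnorm : ‖r • (θ : E)‖ = r := by
    rw [norm_smul, norm_eq_of_mem_sphere, mul_one, Real.norm_of_nonneg hr₀.le]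
  have hpow : r ^ ((dim E : ℝ) + 2 * s) = r ^ (dim E - 1) * r ^ (1 + 2 * s) := by
    rw [← Real.rpow_natCast, ← Real.rpow_add hr₀, Nat.cast_sub Module.finrank_pos]
    push_cast
    ring_nf
  simp only [hnorm, hpow, map_smul, smul_eq_mul]
  field_simp

lemma aecover_compl_closedBall [Nontrivial E] :
    AECover μ (nhdsWithin 0 (Ioi 0)) fun ε : ℝ => (closedBall (0 : E) ε)ᶜ where
  ae_eventually_mem := by
    filter_upwards [μ.ae_ne 0] with h hh
    filter_upwards [mem_nhdsWithin_of_mem_nhds (Iio_mem_nhds (norm_pos_iff.2 hh))] with ε hε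
    simpa using hε
  measurableSet _ := measurableSet_closedBall.compl

lemma truncFracLap_eq_half_integral_secondDiff {u : E → ℝ} {x : E} {ε : ℝ}
    (hinc : IntegrableOn (fracIncrement s u x) (closedBall 0 ε)ᶜ μ) :
    truncFracLap μ s u ε x = (1 / 2) * ∫ h in (closedBall 0 ε)ᶜ,
      (2 * u x - u (x + h) - u (x - h)) / ‖h‖ ^ (dim E + 2 * s) ∂μ := by
  have hpre : Neg.neg ⁻¹' (closedBall (0 : E) ε)ᶜ = (closedBall 0 ε)ᶜ := by ext; simp
  have hneg := Measure.measurePreserving_neg μ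
  have hemb := (MeasurableEquiv.neg E).measurableEmbedding
  have hrefl : ∫ h in (closedBall 0 ε)ᶜ, fracIncrement s u x (-h) ∂μ = truncFracLap μ s u ε x := by
    have h := hneg.setIntegral_preimage_emb hemb (fracIncrement s u x) (closedBall 0 ε)ᶜ
    rwa [hpre] at h
  have hinc' : IntegrableOn (fun h => fracIncrement s u x (-h)) (closedBall 0 ε)ᶜ μ := by
    rw [← hneg.integrableOn_comp_preimage hemb, hpre] at hinc
    exact hinc
  have hsum : ∀ h, (2 * u x - u (x + h) - u (x - h)) / ‖h‖ ^ (dim E + 2 * s) =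
      fracIncrement s u x h + fracIncrement s u x (-h) := fun h => by
    simp only [fracIncrement, norm_neg, ← sub_eq_add_neg]
    ring
  simp only [hsum]
  rw [integral_add hinc hinc', hrefl, truncFracLap]
  ring

lemma tendsto_truncFracLap_of_integrable_secondDiff [Nontrivial E] {u : E → ℝ} {x : E}
    (hinc : ∀ ε > 0, IntegrableOn (fracIncrement s u x) (closedBall 0 ε)ᶜ μ)
    (hsecond : Integrable
      (fun h => (2 * u x - u (x + h) - u (x - h)) / ‖h‖ ^ (dim E + 2 * s)) μ) :
    Tendsto (fun ε => truncFracLap μ s u ε x) (nhdsWithin 0 (Ioi 0)) (nhds ((1 / 2) *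
      ∫ h, (2 * u x - u (x + h) - u (x - h)) / ‖h‖ ^ (dim E + 2 * s) ∂μ)) := by
  refine ((aecover_compl_closedBall.integral_tendsto_of_countably_generated
    hsecond).const_mul (1 / 2)).congr' ?_
  filter_upwards [self_mem_nhdsWithin] with ε hε
  exact (truncFracLap_eq_half_integral_secondDiff (hinc ε hε)).symm

lemma integrableOn_fracIncrement_posRpow_affine (hs₀ : 0 < s) (hs₁ : s ≤ 1) (ℓ : E →L[ℝ] ℝ)
    (c : ℝ) (x : E) {ε : ℝ} (hε : 0 < ε) :
    IntegrableOn (fracIncrement s (fun y => posRpow s (ℓ y + c)) x) (closedBall 0 ε)ᶜ μ := by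
  refine ((integrableOn_posRpow_increment_compl_ball hs₀ hs₁ ℓ (ℓ x + c) hε).mono_set
    (compl_subset_compl.2 ball_subset_closedBall)).congr (Eventually.of_forall fun h => ?_)
  simp only [fracIncrement, map_add, add_right_comm]

theorem tendsto_truncFracLap_posRpow_affine [Nontrivial E] (hs₀ : 0 < s) (hs₁ : s < 1)
    (ℓ : E →L[ℝ] ℝ) {c : ℝ} {x : E} (hx : 0 < ℓ x + c) :
    Tendsto (fun ε => truncFracLap μ s (fun y => posRpow s (ℓ y + c)) ε x)
      (nhdsWithin 0 (Ioi 0)) (nhds 0) := by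
  have hsub (h : E) : ℓ x - ℓ h + c = ℓ x + c - ℓ h := by ring
  have hlim := tendsto_truncFracLap_of_integrable_secondDiff (μ := μ)
    (fun ε hε => integrableOn_fracIncrement_posRpow_affine hs₀ hs₁.le ℓ c x hε)
    (by simpa only [map_add, map_sub, add_right_comm, hsub] using
      integrable_posRpow_secondDiff hs₀ hs₁ ℓ hx)
  simp only [map_add, map_sub, add_right_comm, hsub] at hlim
  rwa [integral_posRpow_secondDiff hs₀ hs₁ ℓ hx, mul_zero] at hlim

end TruncFracLap

/-! ### Lower bounds from minorants -/

section Minorant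

variable {E : Type*} [NormedAddCommGroup E] [NormedSpace ℝ E] [FiniteDimensional ℝ E]
  [MeasurableSpace E] [BorelSpace E] {μ : Measure E} [μ.IsAddHaarMeasure] {s : ℝ}

lemma integrableOn_fracIncrement_of_bounded (hs : 0 < s) {u : E → ℝ} (hu : Measurable u) {M : ℝ}
    (hM : ∀ y, |u y| ≤ M) (x : E) {ε : ℝ} (hε : 0 < ε) :
    IntegrableOn (fracIncrement s u x) (closedBall 0 ε)ᶜ μ :=
  integrableOn_div_norm_rpow_compl_closedBall_of_bounded (M := M + M) (by fun_prop) hε (by linarith)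
    fun _ => (abs_sub _ _).trans (add_le_add (hM _) (hM _))

lemma eventually_le_truncFracLap_of_minorant [Nontrivial E] {Φ W g : E → ℝ} {x : E} {a c : ℝ}
    (hΦ : ∀ ε > 0, IntegrableOn (fracIncrement s Φ x) (closedBall 0 ε)ᶜ μ)
    (hΦlim : Tendsto (fun ε => truncFracLap μ s Φ ε x) (nhdsWithin 0 (Ioi 0)) (nhds 0))
    (hW : ∀ ε > 0, IntegrableOn (fracIncrement s W x) (closedBall 0 ε)ᶜ μ)
    (hg : Integrable (fun h => g h / ‖h‖ ^ (dim E + 2 * s)) μ)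
    (hmin : ∀ h, a * (Φ x - Φ (x + h)) + g h ≤ W x - W (x + h))
    (hc : c < ∫ h, g h / ‖h‖ ^ (dim E + 2 * s) ∂μ) :
    ∀ᶠ ε in nhdsWithin 0 (Ioi 0), c ≤ truncFracLap μ s W ε x := by
  have hlim := (hΦlim.const_mul a).add
    (aecover_compl_closedBall.integral_tendsto_of_countably_generated hg)
  rw [mul_zero, zero_add] at hlim
  filter_upwards [hlim.eventually_const_le hc, self_mem_nhdsWithin] with ε hcε hε
  refine hcε.trans ?_
  simp only [truncFracLap]
  rw [← integral_const_mul, ← integral_add ((hΦ ε hε).const_mul a) hg.integrableOn]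
  refine integral_mono (((hΦ ε hε).const_mul a).add hg.integrableOn) (hW ε hε) fun h => ?_
  simp only [fracIncrement, ← mul_div_assoc, ← add_div]
  exact div_le_div_of_nonneg_right (hmin h) (by positivity)

lemma integrableOn_norm_rpow_div_norm_rpow_ball [Nontrivial E] {a q : ℝ} (hq : q < dim E + a)
    (r : ℝ) : IntegrableOn (fun h : E => ‖h‖ ^ a / ‖h‖ ^ q) (ball 0 r) μ :=
  integrableOn_div_norm_rpow_ball (a := a) (M := 1) (by fun_prop) hq fun h _ => by
    rw [one_mul, abs_of_nonneg (by positivity)]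

lemma integrableOn_one_div_norm_rpow_compl_ball {q r : ℝ} (hq : dim E < q) (hr : 0 < r) :
    IntegrableOn (fun h : E => 1 / ‖h‖ ^ q) (ball 0 r)ᶜ μ :=
  integrableOn_div_norm_rpow_compl_ball (a := 0) (M := 1) measurable_const hr (by simpa using hq)
    (by simp)

lemma integrableOn_one_div_norm_rpow_closedBall {z : E} {r : ℝ} (hr : r < ‖z‖) (q : ℝ) :
    IntegrableOn (fun h => 1 / ‖h‖ ^ q) (closedBall z r) μ := by
  refine ContinuousOn.integrableOn_compact (isCompact_closedBall z r) fun h hh => ?_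
  have hne : ‖h‖ ≠ 0 := by
    rw [norm_ne_zero_iff]
    rintro rfl
    rw [mem_closedBall, dist_zero_left] at hh
    exact hr.not_ge hh
  exact (continuousAt_const.div (continuousAt_id.norm.rpow_const (.inl hne))
    (by positivity)).continuousWithinAt

lemma le_setIntegral_one_div_norm_rpow_closedBall {z : E} {r q : ℝ} (hr₀ : 0 ≤ r) (hr : r < ‖z‖)
    (hq : 0 ≤ q) :
    r ^ dim E * μ.real (ball 0 1) / (‖z‖ + r) ^ q ≤ ∫ h in closedBall z r, 1 / ‖h‖ ^ q ∂μ := by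
  rw [← Measure.addHaar_real_closedBall μ z hr₀, div_eq_inv_mul, ← one_div]
  refine setIntegral_ge_of_const_le_real measurableSet_closedBall measure_closedBall_lt_top.ne
    (fun h hh => ?_) (integrableOn_one_div_norm_rpow_closedBall hr q)
  rw [mem_closedBall, dist_eq_norm] at hh
  have hlow := norm_sub_norm_le z h
  have hup := norm_sub_norm_le h z
  rw [norm_sub_rev] at hlow
  have hpos : 0 < ‖h‖ := by linarith
  gcongr
  linarith

end Minorant

/-! ### The barrier -/

/-- The profile `V - V^(3/2)`, strictly concave and, on `[0, 1/4]`, increasing and comparable to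
`V`. Its strict concavity is what absorbs the curvature of the exterior sphere. -/
noncomputable def concaveProfile (V : ℝ) : ℝ := V - V * √V

lemma concaveProfile_zero : concaveProfile 0 = 0 := by simp [concaveProfile]

lemma continuous_concaveProfile : Continuous concaveProfile := by
  unfold concaveProfile
  fun_prop

lemma concaveProfile_le_tangent {V v : ℝ} (hV : 0 ≤ V) (hv : 0 ≤ v) :
    concaveProfile V ≤ concaveProfile v + (1 - 3 / 2 * √v) * (V - v) := by
  have hsq : 0 ≤ (√V - √v) ^ 2 * (√V + √v / 2) := by positivity
  unfold concaveProfile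
  linear_combination hsq + (√V - 3 / 2 * √v) * Real.sq_sqrt hV + √v / 2 * Real.sq_sqrt hv

lemma sqrt_le_half {v : ℝ} (hv : v ≤ 1 / 4) : √v ≤ 1 / 2 := by
  rw [Real.sqrt_le_left (by norm_num)]
  linarith

lemma concaveProfile_mono {V v : ℝ} (hV : 0 ≤ V) (hVv : V ≤ v) (hv : v ≤ 1 / 4) :
    concaveProfile V ≤ concaveProfile v := by
  have htangent := concaveProfile_le_tangent hV (hV.trans hVv)
  nlinarith [sqrt_le_half hv]

lemma half_le_concaveProfile {V : ℝ} (hV₀ : 0 ≤ V) (hV : V ≤ 1 / 4) :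
    V / 2 ≤ concaveProfile V := by
  unfold concaveProfile
  nlinarith [sqrt_le_half hV]

lemma concaveProfile_nonneg {V : ℝ} (hV₀ : 0 ≤ V) (hV : V ≤ 1 / 4) : 0 ≤ concaveProfile V :=
  (by positivity : 0 ≤ V / 2).trans (half_le_concaveProfile hV₀ hV)

lemma concaveProfile_le_self {V : ℝ} (hV : 0 ≤ V) : concaveProfile V ≤ V :=
  sub_le_self _ (by positivity)

/-- A radial function vanishing on `closedBall x₀ ρ`, growing like `(dist y x₀ - ρ)^s` outside it
until it reaches a plateau determined by `m`, and cut off to zero outside `ball x₀ R`. -/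
noncomputable def barrier {E : Type*} [PseudoMetricSpace E] (s ρ R m : ℝ) (x₀ : E) : E → ℝ :=
  (ball x₀ R).indicator fun y => concaveProfile (min (posRpow s (dist y x₀ - ρ)) m)

section Barrier

variable {E : Type*} [PseudoMetricSpace E] {s ρ R m : ℝ} {x₀ y : E}

lemma barrier_of_mem_ball (hy : dist y x₀ < R) :
    barrier s ρ R m x₀ y = concaveProfile (min (posRpow s (dist y x₀ - ρ)) m) :=
  indicator_of_mem (mem_ball.2 hy) _

lemma barrier_of_notMem_ball (hy : R ≤ dist y x₀) : barrier s ρ R m x₀ y = 0 :=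
  indicator_of_notMem (fun h => hy.not_gt (mem_ball.1 h)) _

lemma barrier_nonneg (hm₀ : 0 ≤ m) (hm : m ≤ 1 / 4) (y : E) : 0 ≤ barrier s ρ R m x₀ y :=
  indicator_nonneg (fun _ _ => concaveProfile_nonneg (le_min (posRpow_nonneg _) hm₀)
    ((min_le_right _ _).trans hm)) y

lemma barrier_le_concaveProfile (hm₀ : 0 ≤ m) (hm : m ≤ 1 / 4) (y : E) :
    barrier s ρ R m x₀ y ≤ concaveProfile (min (posRpow s (dist y x₀ - ρ)) m) :=
  indicator_apply_le' (fun _ => le_rfl) fun _ =>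
    concaveProfile_nonneg (le_min (posRpow_nonneg _) hm₀) ((min_le_right _ _).trans hm)

lemma barrier_le_plateau (hm₀ : 0 ≤ m) (hm : m ≤ 1 / 4) (y : E) :
    barrier s ρ R m x₀ y ≤ concaveProfile m :=
  (barrier_le_concaveProfile hm₀ hm y).trans
    (concaveProfile_mono (le_min (posRpow_nonneg _) hm₀) (min_le_right _ _) hm)

lemma barrier_le_posRpow (hm₀ : 0 ≤ m) (hm : m ≤ 1 / 4) (y : E) :
    barrier s ρ R m x₀ y ≤ posRpow s (dist y x₀ - ρ) :=
  (barrier_le_concaveProfile hm₀ hm y).trans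
    ((concaveProfile_le_self (le_min (posRpow_nonneg _) hm₀)).trans (min_le_left _ _))

lemma tangent_le_concaveProfile_sub_barrier (hm₀ : 0 ≤ m) (hm : m ≤ 1 / 4) {v : ℝ} (hv : 0 ≤ v)
    (y : E) : (1 - 3 / 2 * √v) * (v - min (posRpow s (dist y x₀ - ρ)) m) ≤
      concaveProfile v - barrier s ρ R m x₀ y := by
  have hV : 0 ≤ min (posRpow s (dist y x₀ - ρ)) m := le_min (posRpow_nonneg _) hm₀
  have hW : barrier s ρ R m x₀ y ≤ _ := barrier_le_concaveProfile hm₀ hm y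
  linarith [concaveProfile_le_tangent hV hv]

lemma barrier_eq_zero_of_dist_le (hs : s ≠ 0) (hm : 0 ≤ m) (hy : dist y x₀ ≤ ρ) :
    barrier s ρ R m x₀ y = 0 := by
  rw [barrier, indicator_apply_eq_zero]
  intro _
  rw [posRpow_of_nonpos hs (by linarith), min_eq_left hm, concaveProfile_zero]

lemma continuousOn_barrier (hs : 0 ≤ s) : ContinuousOn (barrier s ρ R m x₀) (ball x₀ R) := by
  have hprofile := continuous_concaveProfile
  have hpos := continuous_posRpow hs
  exact (continuousOn_congr fun y hy => indicator_of_mem hy _).2 (Continuous.continuousOn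
    (hprofile.comp ((hpos.comp (by fun_prop)).min continuous_const)))

lemma measurable_barrier [MeasurableSpace E] [BorelSpace E] (hs : 0 ≤ s) :
    Measurable (barrier s ρ R m x₀) :=
  (continuous_concaveProfile.comp (((continuous_posRpow hs).comp (by fun_prop)).min
    continuous_const)).measurable.indicator measurableSet_ball

end Barrier

/-! ### Curvature error -/

section Curvature

variable {s σ ρ : ℝ}

lemma posRpow_add_sq_div_le_of_le_half {d r a : ℝ} (hs₀ : 0 ≤ s) (hs₁ : s ≤ 1) (hσ : σ ≤ 2 - 2 * s)
    (hρ : 0 < ρ) (hd₀ : 0 < d) (hd₁ : d ≤ 1) (hr₀ : 0 < r) (ha : d - r ≤ a) (hr : r ≤ d / 2) :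
    posRpow s (a + r ^ 2 / ρ) ≤
      posRpow s a + 2 ^ (1 - s) / ρ * (d ^ (-σ) * r ^ (2 * s + σ)) := by
  have hda : d / 2 ≤ a := by linarith
  have ha₀ : 0 < a := by linarith
  have hbernoulli : (a + r ^ 2 / ρ) ^ s ≤ a ^ s + a ^ (s - 1) * (r ^ 2 / ρ) := by
    have hquot : 0 ≤ r ^ 2 / ρ / a := by positivity
    calc (a + r ^ 2 / ρ) ^ s = a ^ s * (1 + r ^ 2 / ρ / a) ^ s := by
          rw [← Real.mul_rpow ha₀.le (by positivity), mul_add, mul_one, mul_div_cancel₀ _ ha₀.ne']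
      _ ≤ a ^ s * (1 + s * (r ^ 2 / ρ / a)) := by
          gcongr
          exact rpow_one_add_le_one_add_mul_self (by linarith) hs₀ hs₁
      _ ≤ a ^ s * (1 + 1 * (r ^ 2 / ρ / a)) := by gcongr
      _ = _ := by rw [Real.rpow_sub_one ha₀.ne']; ring
  have hslope : a ^ (s - 1) ≤ 2 ^ (1 - s) * d ^ (s - 1) :=
    calc a ^ (s - 1) ≤ (d / 2) ^ (s - 1) :=
          Real.rpow_le_rpow_of_nonpos (by positivity) hda (by linarith)
      _ = _ := by
          rw [Real.div_rpow hd₀.le (by norm_num), div_eq_mul_inv, ← Real.rpow_neg (by norm_num),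
            neg_sub, mul_comm]
  have hsq : r ^ 2 ≤ d ^ (2 - 2 * s - σ) * r ^ (2 * s + σ) :=
    calc r ^ 2 = r ^ (2 - 2 * s - σ) * r ^ (2 * s + σ) := by
          rw [← Real.rpow_add hr₀, ← Real.rpow_natCast]
          norm_num
      _ ≤ _ := by
          gcongr
          linarith
  have hpow : d ^ (s - 1) * d ^ (2 - 2 * s - σ) ≤ d ^ (-σ) := by
    rw [← Real.rpow_add hd₀]
    exact Real.rpow_le_rpow_of_exponent_ge hd₀ hd₁ (by linarith)
  rw [posRpow_of_nonneg ha₀.le, posRpow_of_nonneg (by positivity)]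
  refine hbernoulli.trans (add_le_add_right ?_ _)
  calc a ^ (s - 1) * (r ^ 2 / ρ) ≤
        2 ^ (1 - s) * d ^ (s - 1) * (d ^ (2 - 2 * s - σ) * r ^ (2 * s + σ) / ρ) := by gcongr
    _ = 2 ^ (1 - s) / ρ * (d ^ (s - 1) * d ^ (2 - 2 * s - σ) * r ^ (2 * s + σ)) := by ring
    _ ≤ _ := by gcongr

lemma posRpow_add_sq_div_le_of_half_lt {d r : ℝ} (hs₀ : 0 ≤ s) (hs₁ : s ≤ 1) (hσ : 0 ≤ σ)
    (hρ : 0 < ρ) (hd : 0 < d) (hr : d / 2 < r) (a : ℝ) :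
    posRpow s (a + r ^ 2 / ρ) ≤
      posRpow s a + ρ ^ (-s) * 2 ^ σ * (d ^ (-σ) * r ^ (2 * s + σ)) := by
  have hr₀ : 0 < r := by linarith
  have hone : 1 ≤ 2 ^ σ * d ^ (-σ) * r ^ σ := by
    rw [Real.rpow_neg hd.le, ← div_eq_mul_inv, div_mul_eq_mul_div,
      ← Real.mul_rpow (by norm_num) hr₀.le, ← Real.div_rpow (by positivity) hd.le]
    exact Real.one_le_rpow ((one_le_div hd).2 (by linarith)) hσ
  refine (posRpow_add_le hs₀ hs₁ a (by positivity)).trans (add_le_add_right ?_ _)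
  calc (r ^ 2 / ρ) ^ s = ρ ^ (-s) * r ^ (2 * s) * 1 := by
        rw [Real.div_rpow (by positivity) hρ.le, Real.rpow_neg hρ.le, Real.rpow_mul hr₀.le,
          Real.rpow_two]
        ring
    _ ≤ ρ ^ (-s) * r ^ (2 * s) * (2 ^ σ * d ^ (-σ) * r ^ σ) := by gcongr
    _ = _ := by rw [Real.rpow_add hr₀]; ring

lemma exists_posRpow_add_sq_div_le (hs₀ : 0 ≤ s) (hs₁ : s ≤ 1) (hσ₀ : 0 ≤ σ) (hσ : σ ≤ 2 - 2 * s)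
    (hρ : 0 < ρ) : ∃ C ≥ 0, ∀ d r a : ℝ, 0 < d → d ≤ 1 → 0 ≤ r → d - r ≤ a →
      posRpow s (a + r ^ 2 / ρ) ≤ posRpow s a + C * (d ^ (-σ) * r ^ (2 * s + σ)) := by
  refine ⟨max (2 ^ (1 - s) / ρ) (ρ ^ (-s) * 2 ^ σ), by positivity, fun d r a hd₀ hd₁ hr₀ ha => ?_⟩
  rcases hr₀.eq_or_lt with rfl | hr₀
  · rw [zero_pow two_ne_zero, zero_div, add_zero]
    exact le_add_of_nonneg_right (by positivity)
  rcases le_or_gt r (d / 2) with hr | hr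
  · refine (posRpow_add_sq_div_le_of_le_half hs₀ hs₁ hσ hρ hd₀ hd₁ hr₀ ha hr).trans ?_
    gcongr
    exact le_max_left _ _
  · refine (posRpow_add_sq_div_le_of_half_lt hs₀ hs₁ hσ₀ hρ hd₀ hr a).trans ?_
    gcongr
    exact le_max_right _ _

variable {E : Type*} [NormedAddCommGroup E] [InnerProductSpace ℝ E]

lemma norm_smul_add_le {ν h : E} {t : ℝ} (hν : ‖ν‖ = 1) (hρ : 0 < ρ) (ht : ρ ≤ t)
    (hh : ‖h‖ ≤ ρ / 2) : ‖t • ν + h‖ ≤ t + inner ℝ ν h + ‖h‖ ^ 2 / ρ := by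
  have hinner : -‖h‖ ≤ inner ℝ ν h := by
    have := neg_le_of_abs_le (abs_real_inner_le_norm ν h)
    rwa [hν, one_mul] at this
  have hlow : ρ / 2 ≤ t + inner ℝ ν h := by linarith
  have hnorm : ‖t • ν + h‖ ^ 2 = t ^ 2 + 2 * (t * inner ℝ ν h) + ‖h‖ ^ 2 := by
    rw [norm_add_sq_real, norm_smul, hν, real_inner_smul_left, mul_one, Real.norm_eq_abs, sq_abs]
  have hcorr : ‖h‖ ^ 2 ≤ 2 * (t + inner ℝ ν h) * (‖h‖ ^ 2 / ρ) :=
    calc ‖h‖ ^ 2 = 2 * (ρ / 2) * (‖h‖ ^ 2 / ρ) := by field_simp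
      _ ≤ _ := by gcongr
  have hrhs : 0 ≤ t + inner ℝ ν h + ‖h‖ ^ 2 / ρ := add_nonneg (by linarith) (by positivity)
  refine le_of_sq_le_sq ?_ hrhs
  nlinarith [sq_nonneg (inner ℝ ν h), sq_nonneg (‖h‖ ^ 2 / ρ)]

end Curvature

/-! ### The barrier is a strict supersolution -/

/-- Lower bound for the amount by which the increments of the barrier, centred at distance `d` from
the exterior sphere in direction `ν`, exceed those of the tangent half-space profile: a gain by
strict concavity on a ball contained in the exterior ball, minus the curvature error near the
centre, minus a crude bound away from it. -/
noncomputable def barrierExcess {E : Type*} [NormedAddCommGroup E] [NormedSpace ℝ E]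
    (s σ ρ C d : ℝ) (ν h : E) : ℝ :=
  d ^ s * √(d ^ s) / 2 * (closedBall (-((2 * d) • ν)) d).indicator (fun _ => 1) h -
    C * d ^ (-σ) * (ball 0 (ρ / 2)).indicator (fun h => ‖h‖ ^ (2 * s + σ)) h -
    (ball 0 (ρ / 2))ᶜ.indicator (fun _ => 1) h

section Radial

variable {E : Type*} [NormedAddCommGroup E] [NormedSpace ℝ E] {s σ ρ R m d : ℝ} {x₀ ν h : E}

lemma barrierExcess_div (C q : ℝ) (h : E) : barrierExcess s σ ρ C d ν h / ‖h‖ ^ q =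
    d ^ s * √(d ^ s) / 2 * (closedBall (-((2 * d) • ν)) d).indicator (fun h => 1 / ‖h‖ ^ q) h -
      C * d ^ (-σ) * (ball 0 (ρ / 2)).indicator (fun h => ‖h‖ ^ (2 * s + σ) / ‖h‖ ^ q) h -
      (ball 0 (ρ / 2))ᶜ.indicator (fun h => 1 / ‖h‖ ^ q) h := by
  simp only [barrierExcess, div_eq_mul_inv _ (‖_‖ ^ q), indicator_mul_left]
  ring

lemma dist_add_smul_self (hν : ‖ν‖ = 1) {t : ℝ} (ht : 0 ≤ t) : dist (x₀ + t • ν) x₀ = t := by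
  rw [dist_eq_norm, add_sub_cancel_left, norm_smul_of_nonneg ht, hν, mul_one]

lemma barrier_add_smul (hν : ‖ν‖ = 1) (hρ : 0 ≤ ρ) (hd : 0 ≤ d) (hR : ρ + d < R) (hdm : d ^ s ≤ m) :
    barrier s ρ R m x₀ (x₀ + (ρ + d) • ν) = concaveProfile (d ^ s) := by
  have hdist := dist_add_smul_self (x₀ := x₀) hν (add_nonneg hρ hd)
  rw [barrier_of_mem_ball (hdist.trans_lt hR), hdist, add_sub_cancel_left, posRpow_of_nonneg hd,
    min_eq_left hdm]

lemma dist_le_of_mem_closedBall_neg_smul (hν : ‖ν‖ = 1) (hdρ : d ≤ ρ)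
    (hh : h ∈ closedBall (-((2 * d) • ν)) d) : dist (x₀ + (ρ + d) • ν + h) x₀ ≤ ρ := by
  rw [mem_closedBall, dist_eq_norm] at hh
  calc dist (x₀ + (ρ + d) • ν + h) x₀ = ‖(ρ - d) • ν + (h - -((2 * d) • ν))‖ := by
        rw [dist_eq_norm]
        congr 1
        module
    _ ≤ (ρ - d) + d := by
        refine (norm_add_le _ _).trans (add_le_add ?_ hh)
        rw [norm_smul, hν, mul_one, Real.norm_of_nonneg (by linarith)]
    _ = ρ := by ring

end Radial

section Pointwise

variable {E : Type*} [NormedAddCommGroup E] [InnerProductSpace ℝ E] {s σ ρ R m d : ℝ} {x₀ ν h : E}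

lemma exists_posRpow_dist_sub_le (hs₀ : 0 ≤ s) (hs₁ : s ≤ 1) (hσ₀ : 0 ≤ σ) (hσ : σ ≤ 2 - 2 * s)
    (hρ : 0 < ρ) : ∃ C ≥ 0, ∀ (x₀ ν h : E) (d : ℝ), ‖ν‖ = 1 → 0 < d → d ≤ 1 → ‖h‖ ≤ ρ / 2 →
      posRpow s (dist (x₀ + (ρ + d) • ν + h) x₀ - ρ) ≤
        posRpow s (d + inner ℝ ν h) + C * (d ^ (-σ) * ‖h‖ ^ (2 * s + σ)) := by
  obtain ⟨C, hC₀, hC⟩ := exists_posRpow_add_sq_div_le hs₀ hs₁ hσ₀ hσ hρ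
  refine ⟨C, hC₀, fun x₀ ν h d hν hd₀ hd₁ hh => ?_⟩
  have hinner : -‖h‖ ≤ inner ℝ ν h := by
    have := neg_le_of_abs_le (abs_real_inner_le_norm ν h)
    rwa [hν, one_mul] at this
  have hdist := norm_smul_add_le hν hρ (by linarith : ρ ≤ ρ + d) hh
  refine (monotone_posRpow hs₀ ?_).trans
    (hC d ‖h‖ (d + inner ℝ ν h) hd₀ hd₁ (norm_nonneg h) (by linarith))
  rw [dist_eq_norm, add_assoc x₀, add_sub_cancel_left]
  linarith

lemma barrierExcess_le_barrier_sub {C : ℝ} (hs : 0 < s) (hρ : 0 < ρ) (hC : 0 ≤ C) (hν : ‖ν‖ = 1)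
    (hd : 0 < d) (hdρ : d ≤ ρ) (hR : ρ + d < R) (hdm : d ^ s ≤ m) (hm : m ≤ 1 / 4)
    (hcurv : ‖h‖ ≤ ρ / 2 → posRpow s (dist (x₀ + (ρ + d) • ν + h) x₀ - ρ) ≤
      posRpow s (d + inner ℝ ν h) + C * (d ^ (-σ) * ‖h‖ ^ (2 * s + σ))) :
    (1 - 3 / 2 * √(d ^ s)) * (d ^ s - posRpow s (d + inner ℝ ν h)) + barrierExcess s σ ρ C d ν h ≤
      barrier s ρ R m x₀ (x₀ + (ρ + d) • ν) - barrier s ρ R m x₀ (x₀ + (ρ + d) • ν + h) := by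
  have hv : 0 < d ^ s := by positivity
  have hm₀ : 0 ≤ m := hv.le.trans hdm
  have hsqrt := sqrt_le_half (hdm.trans hm)
  have hsqrt₀ := Real.sqrt_nonneg (d ^ s)
  have hΦ := posRpow_nonneg (s := s) (d + inner ℝ ν h)
  have hloss : 0 ≤ C * d ^ (-σ) * (ball 0 (ρ / 2)).indicator (fun h => ‖h‖ ^ (2 * s + σ)) h :=
    mul_nonneg (by positivity) (indicator_nonneg (fun _ _ => by positivity) h)
  have hcrude : 0 ≤ (ball 0 (ρ / 2))ᶜ.indicator (fun _ => (1 : ℝ)) h :=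
    indicator_nonneg (fun _ _ => zero_le_one) h
  rw [barrier_add_smul hν hρ.le hd.le hR hdm]
  have htangent := tangent_le_concaveProfile_sub_barrier (s := s) (ρ := ρ) (R := R) (x₀ := x₀)
    hm₀ hm hv.le (x₀ + (ρ + d) • ν + h)
  unfold barrierExcess
  by_cases hgain : h ∈ closedBall (-((2 * d) • ν)) d
  · rw [indicator_of_mem hgain, barrier_eq_zero_of_dist_le hs.ne' hm₀
      (dist_le_of_mem_closedBall_neg_smul hν hdρ hgain), concaveProfile]
    nlinarith
  rw [indicator_of_notMem hgain]
  by_cases hnear : h ∈ ball 0 (ρ / 2)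
  · rw [indicator_of_mem hnear, indicator_of_notMem (notMem_compl_iff.2 hnear)]
    have hV := (min_le_left _ m).trans (hcurv (mem_ball_zero_iff.1 hnear).le)
    have : 0 ≤ C * (d ^ (-σ) * ‖h‖ ^ (2 * s + σ)) := by positivity
    nlinarith
  · rw [indicator_of_notMem hnear, indicator_of_mem (mem_compl hnear)]
    have hV := min_le_right (posRpow s (dist (x₀ + (ρ + d) • ν + h) x₀ - ρ)) m
    nlinarith

end Pointwise

lemma eventually_le_mul_rpow_neg_sub {σ τ c : ℝ} (hσ : 0 < σ) (hστ : σ < τ) (hc : 0 < c)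
    (A b : ℝ) : ∀ᶠ d in nhdsWithin (0 : ℝ) (Ioi 0), b ≤ c * d ^ (-τ) - A * d ^ (-σ) := by
  have hlim : Tendsto (fun d : ℝ => d ^ (-σ) * (c * d ^ (-(τ - σ)) + -A))
      (nhdsWithin 0 (Ioi 0)) atTop :=
    (tendsto_rpow_neg_nhdsGT_zero (by linarith)).atTop_mul_atTop₀ (tendsto_atTop_add_const_right _ _
      ((tendsto_rpow_neg_nhdsGT_zero (by linarith)).const_mul_atTop hc))
  filter_upwards [hlim.eventually_ge_atTop b, self_mem_nhdsWithin] with d hbd hd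
  have hsplit : d ^ (-τ) = d ^ (-σ) * d ^ (-(τ - σ)) := by
    rw [← Real.rpow_add hd]
    congr 1
    ring
  rw [hsplit]
  linarith

lemma concaveProfile_mul_indicator_le {E : Type*} [NormedAddCommGroup E] {s ρ R m : ℝ}
    {x₀ x z : E} (hm₀ : 0 ≤ m) (hm : m ≤ 1 / 4) (hx : dist x x₀ < R) (hz : 3 * R ≤ ‖z‖) (h : E) :
    concaveProfile m * (closedBall z R).indicator (fun _ => 1) h ≤
      concaveProfile m - barrier s ρ R m x₀ (x + h) := by
  by_cases hh : h ∈ closedBall z R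
  · have hout : R ≤ dist (x + h) x₀ := by
      rw [mem_closedBall, dist_comm, dist_eq_norm] at hh
      have htri := dist_triangle_right (x + h) x x₀
      rw [dist_self_add_left] at htri
      linarith [norm_sub_norm_le z h]
    rw [indicator_of_mem hh, barrier_of_notMem_ball hout, mul_one, sub_zero]
  · rw [indicator_of_notMem hh, mul_zero]
    exact sub_nonneg.2 (barrier_le_plateau hm₀ hm _)

section Supersolution

variable {E : Type*} [NormedAddCommGroup E] [NormedSpace ℝ E] [FiniteDimensional ℝ E]
  [MeasurableSpace E] [BorelSpace E] {μ : Measure E} [μ.IsAddHaarMeasure] {s σ ρ R m d : ℝ}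
  {ν : E}

lemma integrable_barrierExcess_div_and_integral_eq [Nontrivial E] (hs : 0 < s) (hσ : 0 < σ)
    (hρ : 0 < ρ) (hd : 0 < d) (hν : ‖ν‖ = 1) (C : ℝ) :
    Integrable (fun h => barrierExcess s σ ρ C d ν h / ‖h‖ ^ (dim E + 2 * s)) μ ∧
    ∫ h, barrierExcess s σ ρ C d ν h / ‖h‖ ^ (dim E + 2 * s) ∂μ =
      d ^ s * √(d ^ s) / 2 *
          (∫ h in closedBall (-((2 * d) • ν)) d, 1 / ‖h‖ ^ (dim E + 2 * s) ∂μ) -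
        C * d ^ (-σ) *
          (∫ h in ball 0 (ρ / 2), ‖h‖ ^ (2 * s + σ) / ‖h‖ ^ (dim E + 2 * s) ∂μ) -
        ∫ h in (ball 0 (ρ / 2))ᶜ, 1 / ‖h‖ ^ (dim E + 2 * s) ∂μ := by
  have hz : d < ‖-((2 * d) • ν)‖ := by
    rw [norm_neg, norm_smul_of_nonneg (by positivity), hν]
    linarith
  have hgain := ((integrableOn_one_div_norm_rpow_closedBall (μ := μ) hz
    (dim E + 2 * s)).integrable_indicator measurableSet_closedBall).const_mul (d ^ s * √(d ^ s) / 2)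
  have hloss := ((integrableOn_norm_rpow_div_norm_rpow_ball (μ := μ)
    (by linarith : dim E + 2 * s < dim E + (2 * s + σ)) (ρ / 2)).integrable_indicator
      measurableSet_ball).const_mul (C * d ^ (-σ))
  have hcrude := (integrableOn_one_div_norm_rpow_compl_ball (μ := μ)
    (by linarith : dim E < dim E + 2 * s) (half_pos hρ)).integrable_indicator
      measurableSet_ball.compl
  simp only [barrierExcess_div]
  refine ⟨(hgain.sub hloss).sub hcrude, ?_⟩
  rw [integral_sub (by exact hgain.sub hloss) hcrude, integral_sub hgain hloss, integral_const_mul,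
    integral_const_mul, integral_indicator measurableSet_closedBall,
    integral_indicator measurableSet_ball, integral_indicator measurableSet_ball.compl]

lemma mul_rpow_neg_half_le_gain (hs : 0 ≤ s) (hd : 0 < d) (hν : ‖ν‖ = 1) :
    μ.real (ball (0 : E) 1) / (2 * 3 ^ (dim E + 2 * s)) * d ^ (-(s / 2)) ≤
      d ^ s * √(d ^ s) / 2 *
        ∫ h in closedBall (-((2 * d) • ν)) d, 1 / ‖h‖ ^ (dim E + 2 * s) ∂μ := by
  have hz : ‖-((2 * d) • ν)‖ = 2 * d := by
    rw [norm_neg, norm_smul_of_nonneg (by positivity), hν, mul_one]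
  have hmass := le_setIntegral_one_div_norm_rpow_closedBall (μ := μ) (z := -((2 * d) • ν)) hd.le
    (by linarith) (by positivity : 0 ≤ dim E + 2 * s)
  rw [hz, show 2 * d + d = 3 * d by ring, Real.mul_rpow (by norm_num) hd.le] at hmass
  have hexp : d ^ (-(s / 2)) = d ^ s * √(d ^ s) * d ^ dim E / d ^ (dim E + 2 * s) := by
    rw [Real.sqrt_eq_rpow, ← Real.rpow_mul hd.le, ← Real.rpow_natCast, ← Real.rpow_add hd,
      ← Real.rpow_add hd, ← Real.rpow_sub hd]
    ring_nf
  calc _ = d ^ s * √(d ^ s) / 2 *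
        (d ^ dim E * μ.real (ball (0 : E) 1) / (3 ^ (dim E + 2 * s) * d ^ (dim E + 2 * s))) := by
        rw [hexp]
        field_simp
    _ ≤ _ := by gcongr

lemma eventually_one_lt_integral_barrierExcess [Nontrivial E] (hs : 0 < s) (hσ : 0 < σ)
    (hσs : σ < s / 2) (hρ : 0 < ρ) (C : ℝ) :
    ∀ᶠ d in nhdsWithin (0 : ℝ) (Ioi 0), ∀ ν : E, ‖ν‖ = 1 →
      1 < ∫ h, barrierExcess s σ ρ C d ν h / ‖h‖ ^ (dim E + 2 * s) ∂μ := by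
  have hmass : 0 < μ.real (ball (0 : E) 1) :=
    ENNReal.toReal_pos (measure_ball_pos μ _ one_pos).ne' measure_ball_lt_top.ne
  filter_upwards [self_mem_nhdsWithin, eventually_le_mul_rpow_neg_sub hσ hσs
    (by positivity : 0 < μ.real (ball (0 : E) 1) / (2 * 3 ^ (dim E + 2 * s)))
    (C * ∫ h in ball (0 : E) (ρ / 2), ‖h‖ ^ (2 * s + σ) / ‖h‖ ^ (dim E + 2 * s) ∂μ)
    (2 + ∫ h in (ball (0 : E) (ρ / 2))ᶜ, 1 / ‖h‖ ^ (dim E + 2 * s) ∂μ)] with d hd hdom ν hν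
  rw [(integrable_barrierExcess_div_and_integral_eq hs hσ hρ hd hν C).2]
  linarith [mul_rpow_neg_half_le_gain (μ := μ) hs.le hd hν]

lemma integrableOn_fracIncrement_barrier (hs : 0 < s) (hm₀ : 0 ≤ m) (hm : m ≤ 1 / 4) (x₀ x : E)
    {ε : ℝ} (hε : 0 < ε) :
    IntegrableOn (fracIncrement s (barrier s ρ R m x₀) x) (closedBall 0 ε)ᶜ μ :=
  integrableOn_fracIncrement_of_bounded hs (measurable_barrier hs.le)
    (fun y => by rw [abs_of_nonneg (barrier_nonneg hm₀ hm y)]; exact barrier_le_plateau hm₀ hm y)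
    x hε

lemma exists_eventually_le_truncFracLap_barrier_plateau [Nontrivial E] (hs : 0 < s) (hR : 0 < R)
    (hm₀ : 0 < m) (hm : m ≤ 1 / 4) :
    ∃ c > 0, ∀ x₀ x : E, dist x x₀ < R → barrier s ρ R m x₀ x = concaveProfile m →
      ∀ᶠ ε in nhdsWithin 0 (Ioi 0), c ≤ truncFracLap μ s (barrier s ρ R m x₀) ε x := by
  obtain ⟨z, hz⟩ : ∃ z : E, ‖z‖ = 3 * R := exists_norm_eq E (by positivity)
  have hzR : R < ‖z‖ := by linarith
  have hmass : 0 < μ.real (ball (0 : E) 1) :=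
    ENNReal.toReal_pos (measure_ball_pos μ _ one_pos).ne' measure_ball_lt_top.ne
  have hprofile : 0 < concaveProfile m :=
    (by positivity : 0 < m / 2).trans_le (half_le_concaveProfile hm₀.le hm)
  set I : ℝ := ∫ h in closedBall z R, 1 / ‖h‖ ^ (dim E + 2 * s) ∂μ
  have hI : 0 < I := lt_of_lt_of_le (by positivity)
    (le_setIntegral_one_div_norm_rpow_closedBall hR.le hzR (by positivity))
  have hprod : 0 < concaveProfile m * I := by positivity
  refine ⟨concaveProfile m * I / 2, by positivity, fun x₀ x hx hplateau => ?_⟩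
  have hzero : fracIncrement s (fun _ : E => (0 : ℝ)) x = 0 := by
    ext
    simp [fracIncrement]
  have hg (h : E) : concaveProfile m * (closedBall z R).indicator (fun _ => 1) h /
      ‖h‖ ^ (dim E + 2 * s) = concaveProfile m *
        (closedBall z R).indicator (fun h => 1 / ‖h‖ ^ (dim E + 2 * s)) h := by
    simp only [div_eq_mul_inv, indicator_mul_left]
    ring
  refine eventually_le_truncFracLap_of_minorant (Φ := fun _ => 0) (a := 0)
    (g := fun h => concaveProfile m * (closedBall z R).indicator (fun _ => 1) h)
    (fun ε _ => hzero ▸ integrableOn_zero) (by simp [truncFracLap, hzero])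
    (fun ε hε => integrableOn_fracIncrement_barrier hs hm₀.le hm x₀ x hε) ?_ (fun h => ?_) ?_
  · simp only [hg]
    exact ((integrableOn_one_div_norm_rpow_closedBall hzR _).integrable_indicator
      measurableSet_closedBall).const_mul _
  · rw [hplateau, zero_mul, zero_add]
    exact concaveProfile_mul_indicator_le hm₀.le hm hx hz.ge h
  · simp only [hg]
    rw [integral_const_mul, integral_indicator measurableSet_closedBall]
    exact half_lt_self hprod

end Supersolution

section InnerProduct

variable {E : Type*} [NormedAddCommGroup E] [InnerProductSpace ℝ E] [FiniteDimensional ℝ E]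
  [MeasurableSpace E] [BorelSpace E] [Nontrivial E] (μ : Measure E) [μ.IsAddHaarMeasure]
  {s ρ : ℝ}

lemma eventually_one_le_truncFracLap_barrier_near (hs₀ : 0 < s) (hs₁ : s < 1) (hρ : 0 < ρ) :
    ∀ᶠ d in nhdsWithin (0 : ℝ) (Ioi 0), ∀ (x₀ ν : E) (R m : ℝ), ‖ν‖ = 1 → ρ + d < R → d ^ s ≤ m →
      m ≤ 1 / 4 → ∀ᶠ ε in nhdsWithin 0 (Ioi 0),
        1 ≤ truncFracLap μ s (barrier s ρ R m x₀) ε (x₀ + (ρ + d) • ν) := by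
  obtain ⟨σ, hσ₀, hσ⟩ := exists_between
    (lt_min (by linarith) (by linarith) : 0 < min (s / 2) (2 - 2 * s))
  obtain ⟨hσs, hσs'⟩ := lt_min_iff.1 hσ
  obtain ⟨C, hC₀, hC⟩ := exists_posRpow_dist_sub_le (E := E) hs₀.le hs₁.le hσ₀.le hσs'.le hρ
  filter_upwards [eventually_one_lt_integral_barrierExcess (μ := μ) hs₀ hσ₀ hσs hρ C,
    Ioc_mem_nhdsGT one_pos, Ioc_mem_nhdsGT hρ] with d hint hd₁ hdρ x₀ ν R m hν hR hdm hm
  have hd : 0 < d := hd₁.1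
  have hm₀ : 0 ≤ m := (by positivity : 0 ≤ d ^ s).trans hdm
  have hheight (h : E) : innerSL ℝ ν (x₀ + (ρ + d) • ν + h) + (-inner ℝ ν x₀ - ρ) =
      d + inner ℝ ν h := by
    simp only [map_add, map_smul, innerSL_apply_apply, real_inner_self_eq_norm_sq, hν, smul_eq_mul]
    ring
  have hheight₀ : innerSL ℝ ν (x₀ + (ρ + d) • ν) + (-inner ℝ ν x₀ - ρ) = d := by
    simpa using hheight 0
  refine eventually_le_truncFracLap_of_minorant
    (Φ := fun y => posRpow s (innerSL ℝ ν y + (-inner ℝ ν x₀ - ρ)))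
    (a := 1 - 3 / 2 * √(d ^ s)) (g := barrierExcess s σ ρ C d ν)
    (fun ε hε => integrableOn_fracIncrement_posRpow_affine hs₀ hs₁.le _ _ _ hε)
    (tendsto_truncFracLap_posRpow_affine hs₀ hs₁ _ (by rwa [hheight₀]))
    (fun ε hε => integrableOn_fracIncrement_barrier hs₀ hm₀ hm _ _ hε)
    (integrable_barrierExcess_div_and_integral_eq hs₀ hσ₀ hρ hd hν C).1 (fun h => ?_) (hint ν hν)
  simp only [hheight, hheight₀, posRpow_of_nonneg hd.le]
  exact barrierExcess_le_barrier_sub hs₀ hρ hC₀ hν hd hdρ.2 hR hdm hm (hC x₀ ν h d hν hd hd₁.2)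

theorem exists_eventually_le_truncFracLap_barrier (hs₀ : 0 < s) (hs₁ : s < 1) (hρ : 0 < ρ) {R : ℝ}
    (hR : 0 < R) : ∃ m c : ℝ, 0 < m ∧ m ≤ 1 / 4 ∧ 0 < c ∧
      ∀ x₀ x : E, ρ < dist x x₀ → dist x x₀ < R → ∀ᶠ ε in nhdsWithin 0 (Ioi 0),
        c ≤ truncFracLap μ s (barrier s ρ R m x₀) ε x := by
  have hsmall : ∀ᶠ d in nhdsWithin (0 : ℝ) (Ioi 0), d ^ s ≤ 1 / 4 := by
    have hcont := (Real.continuousAt_rpow_const 0 s (.inr hs₀.le)).tendsto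
    rw [Real.zero_rpow hs₀.ne'] at hcont
    exact (hcont.mono_left nhdsWithin_le_nhds).eventually_le_const (by norm_num)
  obtain ⟨η, hη, hnear⟩ := mem_nhdsGT_iff_exists_Ioc_subset.1
    ((eventually_one_le_truncFracLap_barrier_near μ hs₀ hs₁ hρ).and hsmall)
  have hη₀ : 0 < η := hη
  have hm : η ^ s ≤ 1 / 4 := (hnear ⟨hη₀, le_rfl⟩).2
  obtain ⟨c, hc, hplateau⟩ := exists_eventually_le_truncFracLap_barrier_plateau (μ := μ) (ρ := ρ)
    hs₀ hR (by positivity : 0 < η ^ s) hm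
  refine ⟨η ^ s, min 1 c, by positivity, hm, by positivity, fun x₀ x hρx hxR => ?_⟩
  rcases le_or_gt (dist x x₀ - ρ) η with hdη | hdη
  · have hdist : 0 < dist x x₀ := hρ.trans hρx
    have hx : x = x₀ + (ρ + (dist x x₀ - ρ)) • (dist x x₀)⁻¹ • (x - x₀) := by
      rw [add_sub_cancel, smul_inv_smul₀ hdist.ne', add_sub_cancel]
    have hν : ‖(dist x x₀)⁻¹ • (x - x₀)‖ = 1 := by
      rw [norm_smul_of_nonneg (by positivity), ← dist_eq_norm, inv_mul_cancel₀ hdist.ne']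
    have h1 := (hnear ⟨sub_pos.2 hρx, hdη⟩).1 x₀ _ R (η ^ s) hν (by linarith)
      (Real.rpow_le_rpow (by linarith) hdη hs₀.le) hm
    rw [← hx] at h1
    exact h1.mono fun ε => (min_le_left _ _).trans
  · refine (hplateau x₀ x hxR ?_).mono fun ε => (min_le_right _ _).trans
    rw [barrier_of_mem_ball hxR, posRpow_of_nonneg (by linarith),
      min_eq_right (Real.rpow_le_rpow hη₀.le hdη.le hs₀.le)]

end InnerProduct

/-! ### Comparison with barriers -/

/-- `W` is a barrier for `Ω` at the boundary point `z`: it lies between `0` and `dist · z ^ s`, is a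
strict supersolution in `Ω` (its truncated fractional Laplacians are eventually at least `c`), and
is at least `c` on the points of `Ω` whose distance to the frontier is at least `r`. -/
structure IsBoundaryBarrier {E : Type*} [NormedAddCommGroup E] [NormedSpace ℝ E]
    [MeasurableSpace E] (μ : Measure E) (s : ℝ) (Ω : Set E) (r c : ℝ) (z : E) (W : E → ℝ) :
    Prop where
  continuousOn : ContinuousOn W (closure Ω)
  integrableOn : ∀ x {ε : ℝ}, 0 < ε → IntegrableOn (fracIncrement s W x) (closedBall 0 ε)ᶜ μ
  nonneg : ∀ y, 0 ≤ W y
  le_dist_rpow : ∀ y, W y ≤ dist y z ^ s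
  le_truncFracLap : ∀ x ∈ Ω, ∀ᶠ ε in nhdsWithin 0 (Ioi 0), c ≤ truncFracLap μ s W ε x
  le_of_far : ∀ x ∈ Ω, (∀ y ∈ frontier Ω, r ≤ dist x y) → c ≤ W x

lemma lt_dist_of_closedBall_subset_compl {X : Type*} [PseudoMetricSpace X] {Ω : Set X} {x x₀ : X}
    {ρ : ℝ} (hball : closedBall x₀ ρ ⊆ Ωᶜ) (hx : x ∈ Ω) : ρ < dist x x₀ := by
  by_contra! hle
  exact hball (mem_closedBall.2 hle) hx

lemma add_le_dist_of_forall_le_dist_frontier {E : Type*} [NormedAddCommGroup E] [NormedSpace ℝ E]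
    [FiniteDimensional ℝ E] {Ω : Set E} {x x₀ : E} {r ρ : ℝ} (hr : 0 < r) (hρ : 0 ≤ ρ)
    (hball : closedBall x₀ ρ ⊆ Ωᶜ) (hx : x ∈ Ω) (hfar : ∀ y ∈ frontier Ω, r ≤ dist x y) :
    r + ρ ≤ dist x x₀ := by
  have hΩ : Ω ≠ univ := (ne_univ_iff_exists_notMem Ω).2 ⟨x₀, hball (mem_closedBall_self hρ)⟩
  obtain ⟨y, hy, hxy⟩ := exists_mem_frontier_infDist_compl_eq_dist hx hΩ
  have hrx : r ≤ infDist x Ωᶜ := hxy ▸ hfar y hy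
  exact (disjoint_ball_closedBall_iff hr hρ).1
    (disjoint_ball_infDist.mono (ball_subset_ball hrx) hball)

theorem exists_isBoundaryBarrier {E : Type*} [NormedAddCommGroup E] [InnerProductSpace ℝ E]
    [FiniteDimensional ℝ E] [Nontrivial E] [MeasurableSpace E] [BorelSpace E] (μ : Measure E)
    [μ.IsAddHaarMeasure] {s ρ r : ℝ} (hs₀ : 0 < s) (hs₁ : s < 1) (hρ : 0 < ρ) (hr : 0 < r)
    {Ω : Set E} (hΩ : Bornology.IsBounded Ω) :
    ∃ c, 0 < c ∧ ∀ z ∈ closure Ω, ∀ x₀, dist x₀ z = ρ → closedBall x₀ ρ ⊆ Ωᶜ →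
      ∃ W, IsBoundaryBarrier μ s Ω r c z W := by
  obtain ⟨m, c, hm₀, hm, hc, hsuper⟩ := exists_eventually_le_truncFracLap_barrier μ hs₀ hs₁ hρ
    (by positivity : 0 < diam (closure Ω) + ρ + 1)
  have hV : 0 < min (r ^ s) m := by positivity
  have hV' : min (r ^ s) m ≤ 1 / 4 := (min_le_right _ _).trans hm
  have hfar : 0 < concaveProfile (min (r ^ s) m) :=
    (half_pos hV).trans_le (half_le_concaveProfile hV.le hV')
  refine ⟨min c (concaveProfile (min (r ^ s) m)), lt_min hc hfar, fun z hz x₀ hx₀z hball => ?_⟩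
  have hR : ∀ y ∈ closure Ω, dist y x₀ < diam (closure Ω) + ρ + 1 := fun y hy => by
    linarith [dist_triangle_right y x₀ z, dist_le_diam_of_mem hΩ.closure hy hz]
  refine ⟨barrier s ρ (diam (closure Ω) + ρ + 1) m x₀,
    (continuousOn_barrier hs₀.le).mono hR,
    fun x ε hε => integrableOn_fracIncrement_barrier hs₀ hm₀.le hm x₀ x hε,
    barrier_nonneg hm₀.le hm, fun y => ?_, fun x hx => ?_, fun x hx hxfar => ?_⟩
  · rw [← posRpow_of_nonneg dist_nonneg]
    refine (barrier_le_posRpow hm₀.le hm y).trans (monotone_posRpow hs₀.le ?_)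
    linarith [dist_triangle_right y x₀ z]
  · exact (hsuper x₀ x (lt_dist_of_closedBall_subset_compl hball hx)
      (hR x (subset_closure hx))).mono fun ε => (min_le_left _ _).trans
  · have hdist := add_le_dist_of_forall_le_dist_frontier hr hρ.le hball hx hxfar
    rw [barrier_of_mem_ball (hR x (subset_closure hx)), posRpow_of_nonneg (by linarith)]
    refine (min_le_right _ _).trans (concaveProfile_mono hV.le ?_ ((min_le_right _ _).trans hm))
    gcongr
    linarith

lemma exists_mem_lt_and_forall_sub_le {X : Type*} [TopologicalSpace X] {Ω : Set X} {u W : X → ℝ}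
    (hΩ : IsCompact (closure Ω)) (hu : ContinuousOn u (closure Ω)) (hu₀ : ∀ y ∉ Ω, u y = 0)
    (hWc : ContinuousOn W (closure Ω)) (hW₀ : ∀ y, 0 ≤ W y) {x : X} (hx : x ∈ Ω)
    (hlt : W x < u x) : ∃ z ∈ Ω, W z < u z ∧ ∀ y, u y - W y ≤ u z - W z := by
  obtain ⟨z, -, hmax⟩ := hΩ.exists_isMaxOn ⟨x, subset_closure hx⟩ (hu.sub hWc)
  have hz : W z < u z := by linarith [show u x - W x ≤ u z - W z from hmax (subset_closure hx)]
  refine ⟨z, ?_, hz, fun y => ?_⟩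
  · by_contra hzΩ
    linarith [hW₀ z, hu₀ z hzΩ]
  · by_cases hy : y ∈ Ω
    · exact hmax (subset_closure hy)
    · linarith [hW₀ y, hu₀ y hy]

lemma mul_truncFracLap_le_of_forall_sub_le {E : Type*} [NormedAddCommGroup E] [NormedSpace ℝ E]
    [MeasurableSpace E] {μ : Measure E} {s A ε : ℝ} {u W : E → ℝ} {x : E}
    (hu : IntegrableOn (fracIncrement s u x) (closedBall 0 ε)ᶜ μ)
    (hW : IntegrableOn (fracIncrement s W x) (closedBall 0 ε)ᶜ μ)
    (hmax : ∀ y, u y - A * W y ≤ u x - A * W x) :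
    A * truncFracLap μ s W ε x ≤ truncFracLap μ s u ε x := by
  rw [truncFracLap, ← integral_const_mul]
  refine integral_mono (hW.const_mul A) hu fun h => ?_
  simp only [fracIncrement, ← mul_div_assoc]
  gcongr
  linarith [hmax (x + h)]

/-- The normalising constant `C_{n,s}` of the fractional Laplacian. -/
noncomputable def fracLapConst (n : ℕ) (s : ℝ) : ℝ :=
  2 ^ (2 * s) * s * Real.Gamma (s + n / 2) / (Real.pi ^ ((n : ℝ) / 2) * Real.Gamma (1 - s))

section Euclidean

variable {n : ℕ} {s : ℝ} {u W : EuclideanSpace ℝ (Fin n) → ℝ} {x : EuclideanSpace ℝ (Fin n)} {g : ℝ}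

lemma fracLapConst_pos (hs₀ : 0 < s) (hs₁ : s < 1) : 0 < fracLapConst n s := by
  have hnum : 0 < Real.Gamma (s + n / 2) := Real.Gamma_pos_of_pos (by positivity)
  have hden : 0 < Real.Gamma (1 - s) := Real.Gamma_pos_of_pos (by linarith)
  exact div_pos (mul_pos (by positivity) hnum) (mul_pos (by positivity) hden)

lemma truncFracLap_volume_eq (ε : ℝ) : truncFracLap volume s u ε x =
    ∫ y in {y | ε < dist y x}, (u x - u y) / dist x y ^ ((n : ℝ) + 2 * s) := by
  have hset : {y | ε < dist y x} = (closedBall x ε)ᶜ := by ext; simp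
  rw [truncFracLap, hset, ← integral_indicator measurableSet_closedBall.compl,
    ← integral_indicator measurableSet_closedBall.compl,
    ← integral_add_left_eq_self ((closedBall x ε)ᶜ.indicator _) x]
  simp [indicator, fracIncrement]

lemma fracLapEq_iff_tendsto_truncFracLap : fracLapEq n s u x g ↔
    Tendsto (fun ε => fracLapConst n s * truncFracLap volume s u ε x) (nhdsWithin 0 (Ioi 0))
      (nhds g) := by
  simp only [truncFracLap_volume_eq]
  rfl

lemma fracLapEq_neg (h : fracLapEq n s u x g) : fracLapEq n s (-u) x (-g) := by
  refine h.neg.congr fun ε => ?_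
  rw [← mul_neg, ← integral_neg]
  congr! 3
  simp only [Pi.neg_apply]
  ring

lemma mul_le_of_fracLapEq_of_forall_sub_le {A c : ℝ} (hs₀ : 0 < s) (hs₁ : s < 1) (hA : 0 ≤ A)
    (hu : ∀ {ε : ℝ}, 0 < ε → IntegrableOn (fracIncrement s u x) (closedBall 0 ε)ᶜ)
    (hW : ∀ {ε : ℝ}, 0 < ε → IntegrableOn (fracIncrement s W x) (closedBall 0 ε)ᶜ)
    (hc : ∀ᶠ ε in nhdsWithin 0 (Ioi 0), c ≤ truncFracLap volume s W ε x)
    (hmax : ∀ y, u y - A * W y ≤ u x - A * W x) (hg : fracLapEq n s u x g) :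
    fracLapConst n s * (A * c) ≤ g := by
  refine ge_of_tendsto (fracLapEq_iff_tendsto_truncFracLap.1 hg) ?_
  filter_upwards [hc, self_mem_nhdsWithin] with ε hcε hε
  have hconst := fracLapConst_pos (n := n) hs₀ hs₁
  gcongr
  exact (mul_le_mul_of_nonneg_left hcε hA).trans
    (mul_truncFracLap_le_of_forall_sub_le (hu hε) (hW hε) hmax)

variable {Ω : Set (EuclideanSpace ℝ (Fin n))} {r c A K M : ℝ} {z : EuclideanSpace ℝ (Fin n)}

lemma le_mul_of_isBoundaryBarrier (hs₀ : 0 < s) (hs₁ : s < 1) (hΩ : Bornology.IsBounded Ω)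
    (hW : IsBoundaryBarrier volume s Ω r c z W) (hA : 0 ≤ A) (hu : Continuous u)
    (hM : ∀ y, |u y| ≤ M) (hu₀ : ∀ y ∉ Ω, u y = 0)
    (hsub : ∀ y ∈ Ω, (∃ g, fracLapEq n s u y g ∧ g < fracLapConst n s * (A * c)) ∨
      u y ≤ A * c ∧ ∀ y' ∈ frontier Ω, r ≤ dist y y') (hx : x ∈ Ω) :
    u x ≤ A * W x := by
  by_contra! hlt
  obtain ⟨y, hy, hWy, hmax⟩ := exists_mem_lt_and_forall_sub_le hΩ.isCompact_closure
    hu.continuousOn hu₀ (hW.continuousOn.const_mul A)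
    (fun y => mul_nonneg hA (hW.nonneg y)) hx hlt
  rcases hsub y hy with ⟨g, hg, hgA⟩ | ⟨huA, hfar⟩
  · exact hgA.not_ge (mul_le_of_fracLapEq_of_forall_sub_le hs₀ hs₁ hA
      (integrableOn_fracIncrement_of_bounded hs₀ hu.measurable hM y) (hW.integrableOn y)
      (hW.le_truncFracLap y hy) hmax hg)
  · exact (huA.trans (mul_le_mul_of_nonneg_left (hW.le_of_far y hy hfar) hA)).not_gt hWy

lemma le_mul_dist_rpow_of_isBoundaryBarrier (hs₀ : 0 < s) (hs₁ : s < 1)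
    (hΩ : Bornology.IsBounded Ω) (hc : 0 < c) (hW : IsBoundaryBarrier volume s Ω r c z W)
    (hK : 0 ≤ K) (hu : Continuous u) (hM : ∀ y, |u y| ≤ M) (hu₀ : ∀ y ∉ Ω, u y = 0)
    (hsub : ∀ y ∈ Ω, (∃ g, fracLapEq n s u y g ∧ g ≤ K) ∨
      u y ≤ K ∧ ∀ y' ∈ frontier Ω, r ≤ dist y y') (hx : x ∈ Ω) :
    u x ≤ (1 / (fracLapConst n s * c) + 1 / c) * K * dist x z ^ s := by
  have hconst := fracLapConst_pos (n := n) hs₀ hs₁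
  refine le_mul_of_forall_lt₀ fun A hA b hb => ?_
  have hA₀ : 0 < A := lt_of_le_of_lt (by positivity) hA
  have hKA₁ : K < fracLapConst n s * (A * c) := by
    have : 1 / (fracLapConst n s * c) * K < A :=
      lt_of_le_of_lt (mul_le_mul_of_nonneg_right (le_add_of_nonneg_right (by positivity)) hK) hA
    field_simp at this
    linarith
  have hKA₂ : K ≤ A * c := by
    have : 1 / c * K < A :=
      lt_of_le_of_lt (mul_le_mul_of_nonneg_right (le_add_of_nonneg_left (by positivity)) hK) hA
    field_simp at this
    linarith
  calc u x ≤ A * W x := le_mul_of_isBoundaryBarrier hs₀ hs₁ hΩ hW hA₀.le hu hM hu₀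
        (fun y hy => (hsub y hy).imp (fun ⟨g, hg, hgK⟩ => ⟨g, hg, hgK.trans_lt hKA₁⟩)
          (And.imp_left hKA₂.trans')) hx
    _ ≤ A * b := by
      gcongr
      exact (hW.le_dist_rpow x).trans hb.le

theorem exists_forall_le_mul_infDist_frontier_rpow (hn : 0 < n) (hs₀ : 0 < s) (hs₁ : s < 1)
    (hΩ : Bornology.IsBounded Ω) {ρ : ℝ} (hρ : 0 < ρ) (hball : ExteriorBallCondition n ρ Ω)
    (hr : 0 < r) :
    ∃ C, ∀ (u : EuclideanSpace ℝ (Fin n) → ℝ) (K M : ℝ), 0 ≤ K → Continuous u →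
      (∀ y, |u y| ≤ M) → (∀ y ∉ Ω, u y = 0) →
      (∀ y ∈ Ω, (∃ g, fracLapEq n s u y g ∧ g ≤ K) ∨
        u y ≤ K ∧ ∀ y' ∈ frontier Ω, r ≤ dist y y') →
      ∀ x ∈ Ω, u x ≤ C * K * infDist x (frontier Ω) ^ s := by
  have : Nonempty (Fin n) := ⟨⟨0, hn⟩⟩
  obtain ⟨c, hc, hbarrier⟩ := exists_isBoundaryBarrier (E := EuclideanSpace ℝ (Fin n)) volume
    hs₀ hs₁ hρ hr hΩ
  refine ⟨1 / (fracLapConst n s * c) + 1 / c, fun u K M hK hu hM hu₀ hsub x hx => ?_⟩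
  have hΩ_ne : Ω ≠ univ := fun h => NormedSpace.unbounded_univ ℝ _ (h ▸ hΩ)
  have hcompact : IsCompact (frontier Ω) :=
    hΩ.isCompact_closure.of_isClosed_subset isClosed_frontier frontier_subset_closure
  obtain ⟨z, hz, hxz⟩ :=
    hcompact.exists_infDist_eq_dist (nonempty_frontier_iff.2 ⟨⟨x, hx⟩, hΩ_ne⟩) x
  obtain ⟨x₀, hx₀z, hx₀⟩ := hball z hz
  obtain ⟨W, hW⟩ := hbarrier z (frontier_subset_closure hz) x₀ hx₀z hx₀
  rw [hxz]
  exact le_mul_dist_rpow_of_isBoundaryBarrier hs₀ hs₁ hΩ hc hW hK hu hM hu₀ hsub hx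

variable {f ψ : EuclideanSpace ℝ (Fin n) → ℝ}

lemma SolvesObstacle.fracLapEq_or_eq (h : SolvesObstacle n s Ω f ψ u) (hx : x ∈ Ω) :
    fracLapEq n s u x (f x) ∨ u x = ψ x := by
  obtain ⟨-, -, -, hsol⟩ := h
  obtain ⟨g, hg, hmin⟩ := hsol x hx
  refine (min_choice (g - f x) (u x - ψ x)).imp (fun hleft => ?_) fun hright => ?_
  · rwa [← sub_eq_zero.1 (hleft.symm.trans hmin)]
  · exact sub_eq_zero.1 (hright.symm.trans hmin)

lemma SolvesObstacle.exists_fracLapEq_ge (h : SolvesObstacle n s Ω f ψ u) (hx : x ∈ Ω) :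
    ∃ g, fracLapEq n s u x g ∧ f x ≤ g := by
  obtain ⟨-, -, -, hsol⟩ := h
  obtain ⟨g, hg, hmin⟩ := hsol x hx
  exact ⟨g, hg, sub_nonneg.1 (hmin ▸ min_le_left _ _)⟩

end Euclidean

lemma abs_le_supOn {α : Type*} {S : Set α} {f : α → ℝ} (hf : ∃ M, ∀ x ∈ S, |f x| ≤ M) {x : α}
    (hx : x ∈ S) : |f x| ≤ supOn S f :=
  le_csSup (hf.imp fun _ hM => forall_mem_image.2 hM) (mem_image_of_mem _ hx)

/-- **`δ^s` boundary behavior.** Let `Ω` be a bounded open set satisfying the exterior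
ball condition with radius `ρ > 0` and let `r₀ > 0`. There is a constant
`C = C(n,s,Ω,ρ,r₀)` such that any solution `u` of the fractional obstacle problem with
bounded data, whose contact set stays at distance `≥ r₀` from `∂Ω`, satisfies
`|u(x)| ≤ C (‖f‖_∞ + ‖ψ‖_∞) δ(x)^s` for every `x ∈ Ω`, where `δ(x) = dist(x, ∂Ω)`. -/
theorem delta_s_boundary_behavior
    (n : ℕ) (hn : 0 < n) (s : ℝ) (hs : s ∈ Set.Ioo (0 : ℝ) 1)
    (Ω : Set (EuclideanSpace ℝ (Fin n)))
    (hΩo : IsOpen Ω) (hΩb : Bornology.IsBounded Ω)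
    (ρ : ℝ) (hρ : 0 < ρ) (hball : ExteriorBallCondition n ρ Ω)
    (r₀ : ℝ) (hr₀ : 0 < r₀) :
    ∃ C : ℝ, ∀ f ψ u : EuclideanSpace ℝ (Fin n) → ℝ,
      (∃ M, ∀ x ∈ Ω, |f x| ≤ M) → (∃ M, ∀ x ∈ Ω, |ψ x| ≤ M) →
      (∀ x ∉ Ω, ψ x < 0) →
      SolvesObstacle n s Ω f ψ u →
      (∀ x ∈ {x ∈ Ω | u x = ψ x}, ∀ y ∈ frontier Ω, r₀ ≤ dist x y) →
      ∀ x ∈ Ω,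
        |u x| ≤ C * (supOn Ω f + supOn Ω ψ) * Metric.infDist x (frontier Ω) ^ s := by
  obtain ⟨C, hC⟩ :=
    exists_forall_le_mul_infDist_frontier_rpow hn hs.1 hs.2 hΩb hρ hball hr₀
  refine ⟨C, fun f ψ u hf hψ _ hu hΛ x hx => ?_⟩
  have ⟨⟨M, hM⟩, hcont, hu₀, _⟩ := hu
  have hf₀ : 0 ≤ supOn Ω f := (abs_nonneg _).trans (abs_le_supOn hf hx)
  have hψ₀ : 0 ≤ supOn Ω ψ := (abs_nonneg _).trans (abs_le_supOn hψ hx)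
  refine abs_le'.2 ⟨hC u _ M (by positivity) hcont hM hu₀ (fun y hy => ?_) x hx,
    hC (-u) _ M (by positivity) hcont.neg (by simpa using hM) (by simpa using hu₀)
      (fun y hy => .inl ?_) x hx⟩
  · refine (hu.fracLapEq_or_eq hy).imp (fun hg => ⟨f y, hg, ?_⟩) fun hcontact => ⟨?_, ?_⟩
    · linarith [le_of_abs_le (abs_le_supOn hf hy)]
    · linarith [le_of_abs_le (abs_le_supOn hψ hy)]
    · exact hΛ y ⟨hy, hcontact⟩
  · obtain ⟨g, hg, hfg⟩ := hu.exists_fracLapEq_ge hy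
    exact ⟨-g, fracLapEq_neg hg, by linarith [neg_le_of_abs_le (abs_le_supOn hf hy)]⟩
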